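/- arXiv:math-ph/0308007 — 4 statements merged into one kernel-verified Lean document; each statement's English description precedes it below -/
import Mathlib

section
/- Let d ≥ 2 and let X : ℝ × [0,π] → ℝ^d be a smooth map satisfying the wave equation ∂²X/∂τ² = ∂²X/∂σ², the Neumann boundary conditions ∂X/∂σ(τ,0) = ∂X/∂σ(τ,π) = 0, the constraints η(∂X/∂τ ± ∂X/∂σ, ∂X/∂τ ± ∂X/∂σ) = 0 (both signs), and P⁺ := ∂X⁺/∂τ > 0 everywhere, where X⁺ = (X⁰ + X^{d−1})/√2. Then there exists a smooth strictly increasing function g : ℝ → ℝ with g(s + 2π) = g(s) + 2π such that the map Φ(τ,σ) = ((g(τ+σ) + g(τ−σ))/2, (g(τ+σ) − g(τ−σ))/2) is a diffeomorphism of the strip ℝ × [0,π] onto itself, and the reparametrized world sheet Y = X ∘ Φ⁻¹ still satisfies the wave equation, the Neumann boundary conditions, the constraints, and in addition Y⁺(τ,σ) = p⁺ τ for some constant p⁺ > 0. -/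
/-!
By d'Alembert's formula (`dAlembert`), a solution of the wave equation on the strip with Neumann
conditions is `X(τ,σ) = (U(τ+σ) + U(τ-σ))/2`, where `U(s) = X(s,0)` is the boundary curve, and `U'`
is `2π`-periodic. The formula follows because `∂_τ X ± ∂_σ X` is constant along the characteristics
`τ ± σ = const` (`transport`). At `σ = 0` the constraints say that `U'` is null, and the positivity
of `P⁺` says that `(U⁺)' > 0`.

Hence `g = U⁺ / p⁺`, with `p⁺` the increment of `U⁺` over a period divided by `2π`, is a smooth
increasing function commuting with the translation by `2π`; it has a smooth inverse `h`
(`exists_smooth_inverse`), and `confMap h` inverts `confMap g`. The reparametrized world sheet is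
generated in the same way by the curve `V = U ∘ h`. Since `V' = h' • (U' ∘ h)` is null and
`2π`-periodic, the constraints and the Neumann conditions persist, and `V⁺(s) = p⁺ s` gives
`Y⁺ = p⁺ τ`.
-/

open Real Set

noncomputable section

/-- partial derivative in τ of a world sheet `X : ℝ → ℝ → (Fin d → ℝ)`. -/
def pt {d : ℕ} (X : ℝ → ℝ → Fin d → ℝ) : ℝ → ℝ → Fin d → ℝ :=
  fun τ σ => deriv (fun t => X t σ) τ

/-- partial derivative in σ. -/
def ps {d : ℕ} (X : ℝ → ℝ → Fin d → ℝ) : ℝ → ℝ → Fin d → ℝ :=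
  fun τ σ => deriv (fun s => X τ s) σ

/-- The Minkowski form η on ℝ^d : η(x,y) = −x⁰y⁰ + Σ_{k≥1} x^k y^k. -/
def eta {d : ℕ} (x y : Fin d → ℝ) : ℝ :=
  ∑ k, if k.val = 0 then -(x k * y k) else x k * y k

/-- The strip ℝ × [0,π]. -/
def Strip : Set (ℝ × ℝ) := Set.univ ×ˢ Icc (0:ℝ) π

/-- The conformal map Φ of the strip induced by `g`. -/
def confMap (g : ℝ → ℝ) : ℝ × ℝ → ℝ × ℝ :=
  fun z => ((g (z.1 + z.2) + g (z.1 - z.2)) / 2, (g (z.1 + z.2) - g (z.1 - z.2)) / 2)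

section Helpers

variable {d : ℕ}

lemma pt_eq_fderiv {X : ℝ → ℝ → Fin d → ℝ}
    (hX : ContDiff ℝ (⊤ : ℕ∞) (fun z : ℝ × ℝ => X z.1 z.2)) (τ σ : ℝ) :
    pt X τ σ = fderiv ℝ (fun z : ℝ × ℝ => X z.1 z.2) (τ, σ) (1, 0) := by
  have h1 : HasDerivAt (fun t : ℝ => ((t, σ) : ℝ × ℝ)) (1, 0) τ :=
    (hasDerivAt_id τ).prodMk (hasDerivAt_const τ σ)
  have h2 := ((hX.differentiable (by simp)) (τ, σ)).hasFDerivAt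
  exact (h2.comp_hasDerivAt τ h1).deriv

lemma ps_eq_fderiv {X : ℝ → ℝ → Fin d → ℝ}
    (hX : ContDiff ℝ (⊤ : ℕ∞) (fun z : ℝ × ℝ => X z.1 z.2)) (τ σ : ℝ) :
    ps X τ σ = fderiv ℝ (fun z : ℝ × ℝ => X z.1 z.2) (τ, σ) (0, 1) := by
  have h1 : HasDerivAt (fun s : ℝ => ((τ, s) : ℝ × ℝ)) (0, 1) σ :=
    (hasDerivAt_const σ τ).prodMk (hasDerivAt_id σ)
  have h2 := ((hX.differentiable (by simp)) (τ, σ)).hasFDerivAt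
  exact (h2.comp_hasDerivAt σ h1).deriv

/-- A curve with everywhere vanishing derivative on `[0, π]` keeps its initial value there. -/
lemma eq_initial_of_hasDerivAt_zero {f : ℝ → Fin d → ℝ}
    (hc : Continuous f) (h : ∀ s ∈ Icc (0:ℝ) π, HasDerivAt f 0 s) {σ : ℝ}
    (hσ : σ ∈ Icc (0:ℝ) π) : f σ = f 0 :=
  constant_of_has_deriv_right_zero hc.continuousOn
    (fun s hs => (h s (Ico_subset_Icc_self hs)).hasDerivWithinAt) σ hσ

/-- For a solution of the wave equation and `ε = ±1`, the combination `∂_τ X + ε ∂_σ X` is constant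
along the characteristics `τ + ε σ = const`, hence equal to its value at `σ = 0`. -/
lemma transport {X : ℝ → ℝ → Fin d → ℝ}
    (hX : ContDiff ℝ (⊤ : ℕ∞) (fun z : ℝ × ℝ => X z.1 z.2))
    (hwave : ∀ τ σ, σ ∈ Icc (0:ℝ) π → pt (pt X) τ σ = ps (ps X) τ σ)
    (ε : ℝ) (hε : ε = 1 ∨ ε = -1) (a σ : ℝ) (hσ : σ ∈ Icc (0:ℝ) π) :
    pt X (a - ε * σ) σ + ε • ps X (a - ε * σ) σ = pt X a 0 + ε • ps X a 0 := by
  set f : ℝ × ℝ → Fin d → ℝ := fun z => X z.1 z.2 with hf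
  have hD : ContDiff ℝ (⊤ : ℕ∞) (fderiv ℝ f) := hX.fderiv_right (by simp)
  have hpt : ContDiff ℝ (⊤ : ℕ∞) (fun z : ℝ × ℝ => pt X z.1 z.2) := by
    simp only [pt_eq_fderiv hX]; exact hD.clm_apply contDiff_const
  have hps : ContDiff ℝ (⊤ : ℕ∞) (fun z : ℝ × ℝ => ps X z.1 z.2) := by
    simp only [ps_eq_fderiv hX]; exact hD.clm_apply contDiff_const
  have hDd : Differentiable ℝ (fderiv ℝ f) := hD.differentiable (by simp)
  -- second partial derivatives in terms of the second Fréchet derivative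
  have happ : ∀ (v w : ℝ × ℝ) (z : ℝ × ℝ),
      fderiv ℝ (fun z => fderiv ℝ f z v) z w = fderiv ℝ (fderiv ℝ f) z w v := by
    intro v w z
    have := (hDd z).hasFDerivAt.clm_apply (hasFDerivAt_const v z)
    rw [this.fderiv]; simp
  have htt : ∀ τ σ, pt (pt X) τ σ = fderiv ℝ (fderiv ℝ f) (τ, σ) (1, 0) (1, 0) := by
    intro τ σ
    rw [pt_eq_fderiv hpt, ← happ]
    simp only [pt_eq_fderiv hX, hf]
  have hss : ∀ τ σ, ps (ps X) τ σ = fderiv ℝ (fderiv ℝ f) (τ, σ) (0, 1) (0, 1) := by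
    intro τ σ
    rw [ps_eq_fderiv hps, ← happ]
    simp only [ps_eq_fderiv hX, hf]
  have key : ∀ s ∈ Icc (0:ℝ) π,
      HasDerivAt (fun s : ℝ => fderiv ℝ f (a - ε * s, s) (1, ε)) 0 s := by
    intro s hs
    have h1 : HasDerivAt (fun s : ℝ => ((a - ε * s, s) : ℝ × ℝ)) (-ε, 1) s := by
      have := ((hasDerivAt_id s).const_mul ε).const_sub a
      simpa using this.prodMk (hasDerivAt_id s)
    have h0 := (hDd (a - ε * s, s)).hasFDerivAt.clm_apply
      (hasFDerivAt_const ((1, ε) : ℝ × ℝ) (a - ε * s, s))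
    have h2 := HasFDerivAt.comp_hasDerivAt (f := fun s : ℝ => ((a - ε * s, s) : ℝ × ℝ)) s h0 h1
    have hsymm : fderiv ℝ (fderiv ℝ f) (a - ε * s, s) (1, 0) (0, 1)
        = fderiv ℝ (fderiv ℝ f) (a - ε * s, s) (0, 1) (1, 0) :=
      (hX.contDiffAt.isSymmSndFDerivAt
        (by simpa using WithTop.coe_le_coe.mpr (le_top : (2 : ℕ∞) ≤ ⊤))) _ _
    have hw := hwave (a - ε * s) s hs
    rw [htt, hss] at hw
    have e1 : ((1, ε) : ℝ × ℝ) = (1, 0) + ε • (0, 1) := by simp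
    have e2 : ((-ε, 1) : ℝ × ℝ) = (-ε) • (1, 0) + (0, 1) := by simp
    -- the mixed terms cancel by symmetry, the pure ones by the wave equation and `ε ^ 2 = 1`
    have hzero : (fderiv ℝ f (a - ε * s, s) ∘SL (0 : ℝ × ℝ →L[ℝ] ℝ × ℝ)
        + (fderiv ℝ (fderiv ℝ f) (a - ε * s, s)).flip (1, ε)) (-ε, 1) = 0 := by
      rw [e1, e2]
      simp only [map_add, map_smul, add_apply, smul_apply,
        ContinuousLinearMap.comp_apply, ContinuousLinearMap.flip_apply,
        zero_apply, hsymm, hw, map_zero, zero_add]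
      rcases hε with rfl | rfl <;> simp
    rw [hzero] at h2
    exact h2
  have hsplit : ∀ τ σ, pt X τ σ + ε • ps X τ σ = fderiv ℝ f (τ, σ) (1, ε) := by
    intro τ σ
    rw [pt_eq_fderiv hX, ps_eq_fderiv hX, ← map_smul, ← map_add]
    simp [hf]
  have hc : Continuous (fun s : ℝ => fderiv ℝ f (a - ε * s, s) (1, ε)) :=
    (hD.continuous.comp (by fun_prop)).clm_apply continuous_const
  rw [hsplit, hsplit]
  simpa using eq_initial_of_hasDerivAt_zero hc key hσ

/-- World sheet generated by its boundary curve `V`: the average of a left mover and a right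
mover with the same profile. -/
def sheet (V : ℝ → Fin d → ℝ) : ℝ → ℝ → Fin d → ℝ :=
  fun τ σ => (2⁻¹ : ℝ) • (V (τ + σ) + V (τ - σ))

lemma pt_sheet {V : ℝ → Fin d → ℝ} (hV : Differentiable ℝ V) :
    pt (sheet V) = sheet (deriv V) := by
  funext τ σ
  have h1 := (hV (τ + σ)).hasDerivAt.comp_add_const τ σ
  have h2 := (hV (τ - σ)).hasDerivAt.comp_sub_const τ σ
  exact ((h1.add h2).const_smul (2⁻¹ : ℝ)).deriv

lemma hasDerivAt_sheet_right {V : ℝ → Fin d → ℝ} (hV : Differentiable ℝ V) (τ σ : ℝ) :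
    HasDerivAt (fun s => sheet V τ s)
      ((2⁻¹ : ℝ) • (deriv V (τ + σ) - deriv V (τ - σ))) σ := by
  have h1 := (hV (τ + σ)).hasDerivAt.comp_const_add τ σ
  have h2 := (hV (τ - σ)).hasDerivAt.comp_const_sub τ σ
  rw [sub_eq_add_neg]
  exact (h1.add h2).const_smul (2⁻¹ : ℝ)

lemma ps_sheet {V : ℝ → Fin d → ℝ} (hV : Differentiable ℝ V) (τ σ : ℝ) :
    ps (sheet V) τ σ = (2⁻¹ : ℝ) • (deriv V (τ + σ) - deriv V (τ - σ)) :=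
  (hasDerivAt_sheet_right hV τ σ).deriv

lemma ps_ps_sheet {V : ℝ → Fin d → ℝ} (hV : Differentiable ℝ V)
    (hV' : Differentiable ℝ (deriv V)) :
    ps (ps (sheet V)) = sheet (deriv (deriv V)) := by
  funext τ σ
  have h1 := (hV' (τ + σ)).hasDerivAt.comp_const_add τ σ
  have h2 := (hV' (τ - σ)).hasDerivAt.comp_const_sub τ σ
  have h3 := (h1.sub h2).const_smul (2⁻¹ : ℝ)
  rw [sub_neg_eq_add] at h3
  have : (fun s => ps (sheet V) τ s) =
      fun s => (2⁻¹ : ℝ) • (deriv V (τ + s) - deriv V (τ - s)) := by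
    funext s; exact ps_sheet hV τ s
  rw [ps, this]
  exact h3.deriv

/-- The Minkowski form is quadratic. -/
lemma eta_smul_self (c : ℝ) (x : Fin d → ℝ) : eta (c • x) (c • x) = c ^ 2 * eta x x := by
  unfold eta
  rw [Finset.mul_sum]
  refine Finset.sum_congr rfl fun k _ => ?_
  split_ifs <;> simp <;> ring

/-- D'Alembert's formula on the strip with Neumann data at `σ = 0`: the world sheet is determined
by its boundary curve, and the Neumann condition at `σ = π` makes the velocity of that curve
`2π`-periodic. -/
lemma dAlembert {X : ℝ → ℝ → Fin d → ℝ}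
    (hX : ContDiff ℝ (⊤ : ℕ∞) (fun z : ℝ × ℝ => X z.1 z.2))
    (hwave : ∀ τ σ, σ ∈ Icc (0:ℝ) π → pt (pt X) τ σ = ps (ps X) τ σ)
    (hbc : ∀ τ, ps X τ 0 = 0 ∧ ps X τ π = 0) :
    (∀ τ σ, σ ∈ Icc (0:ℝ) π → X τ σ = sheet (fun s => X s 0) τ σ) ∧
      ∀ s, deriv (fun s => X s 0) (s + 2 * π) = deriv (fun s => X s 0) s := by
  set U : ℝ → Fin d → ℝ := fun s => X s 0 with hU
  have hUs : ContDiff ℝ (⊤ : ℕ∞) U := hX.comp (contDiff_id.prodMk contDiff_const)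
  have hUd : Differentiable ℝ U := hUs.differentiable (by simp)
  have hps : ∀ τ σ, σ ∈ Icc (0:ℝ) π →
      ps X τ σ = (2⁻¹ : ℝ) • (deriv U (τ + σ) - deriv U (τ - σ)) := by
    intro τ σ hσ
    have h1 := transport hX hwave 1 (Or.inl rfl) (τ + σ) σ hσ
    have h2 := transport hX hwave (-1) (Or.inr rfl) (τ - σ) σ hσ
    rw [(hbc _).1, smul_zero, add_zero] at h1 h2
    rw [show τ + σ - 1 * σ = τ by ring] at h1
    rw [show τ - σ - -1 * σ = τ by ring] at h2
    change _ = deriv U (τ + σ) at h1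
    change _ = deriv U (τ - σ) at h2
    rw [← h1, ← h2]
    module
  constructor
  · intro τ σ hσ
    have hd : ∀ s ∈ Icc (0:ℝ) π, HasDerivAt (fun s => X τ s - sheet U τ s) 0 s := by
      intro s hs
      have hXd : Differentiable ℝ (fun s => X τ s) :=
        (hX.comp (contDiff_const.prodMk contDiff_id)).differentiable (by simp)
      have h1 := (hXd s).hasDerivAt
      rw [show deriv (fun s => X τ s) s = _ from hps τ s hs] at h1
      have h2 := h1.sub (hasDerivAt_sheet_right hUd τ s)
      rw [sub_self] at h2
      exact h2
    have hc : Continuous (fun s => X τ s - sheet U τ s) := by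
      have : Continuous (fun s => X τ s) :=
        (hX.comp (contDiff_const.prodMk contDiff_id)).continuous
      have hUc := hUd.continuous
      unfold sheet
      fun_prop
    have h := eq_initial_of_hasDerivAt_zero hc hd hσ
    have h0 : sheet U τ 0 = X τ 0 := by
      simp only [sheet, hU, add_zero, sub_zero]; module
    rw [h0, sub_self] at h
    exact sub_eq_zero.mp h
  · intro s
    have h := hps (s + π) π ⟨pi_pos.le, le_rfl⟩
    rw [(hbc _).2, show s + π + π = s + 2 * π by ring, show s + π - π = s by ring] at h
    have h' := (smul_eq_zero.mp h.symm).resolve_left (by norm_num)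
    exact sub_eq_zero.mp h'

/-- A smooth map with positive derivative that commutes with translation by `2π` up to `2π` has a
smooth monotone inverse with the same property. -/
lemma exists_smooth_inverse {g : ℝ → ℝ} (hg : ContDiff ℝ (⊤ : ℕ∞) g)
    (hg' : ∀ s, 0 < deriv g s) (hper : ∀ s, g (s + 2 * π) = g s + 2 * π) :
    ∃ h : ℝ → ℝ, ContDiff ℝ (⊤ : ℕ∞) h ∧ Monotone h ∧ (∀ s, h (s + 2 * π) = h s + 2 * π) ∧
      (∀ s, h (g s) = s) ∧ ∀ s, g (h s) = s := by
  have hmono : StrictMono g := strictMono_of_deriv_pos hg'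
  have hn : ∀ n : ℕ, g (n * (2 * π)) = g 0 + n * (2 * π) ∧
      g (-(n * (2 * π))) = g 0 - n * (2 * π) := by
    intro n
    induction n with
    | zero => simp
    | succ n ih =>
      have h1 := hper (n * (2 * π))
      have h2 := hper (-((n + 1) * (2 * π)))
      rw [show -(((n:ℝ) + 1) * (2 * π)) + 2 * π = -(n * (2 * π)) by ring] at h2
      push_cast
      rw [show ((n:ℝ) + 1) * (2 * π) = n * (2 * π) + 2 * π by ring] at *
      exact ⟨by linarith, by linarith⟩
  have hsurj : Function.Surjective g := by
    intro y
    obtain ⟨n, hn'⟩ := exists_nat_ge (|y - g 0| / (2 * π))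
    rw [div_le_iff₀ (by positivity)] at hn'
    have hb := abs_le.mp hn'
    refine mem_range_of_exists_le_of_exists_ge hg.continuous
      ⟨-(n * (2 * π)), ?_⟩ ⟨n * (2 * π), ?_⟩
    · rw [(hn n).2]; linarith
    · rw [(hn n).1]; linarith
  let e := hmono.orderIsoOfSurjective g hsurj
  have heg : ∀ s, e s = g s := fun _ => rfl
  have hl : ∀ s, e.symm (g s) = s := fun s => e.symm_apply_apply s
  have hr : ∀ s, g (e.symm s) = s := fun s => e.apply_symm_apply s
  refine ⟨e.symm, ?_, e.symm.monotone, ?_, hl, hr⟩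
  · exact e.toHomeomorph.contDiff_symm_deriv (f' := deriv g) (fun s => (hg' s).ne')
      (fun s => ((hg.differentiable (by simp)) s).hasDerivAt) hg
  · intro s
    apply hmono.injective
    rw [hper, hr, hr]

lemma confMap_left_inverse {g h : ℝ → ℝ} (hl : ∀ s, h (g s) = s) (z : ℝ × ℝ) :
    confMap h (confMap g z) = z := by
  have h1 : ∀ a b : ℝ, (a + b) / 2 + (a - b) / 2 = a := fun a b => by ring
  have h2 : ∀ a b : ℝ, (a + b) / 2 - (a - b) / 2 = b := fun a b => by ring
  ext <;> simp only [confMap, h1, h2, hl] <;> ring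

lemma confMap_mapsTo {g : ℝ → ℝ} (hg : Monotone g) (hper : ∀ s, g (s + 2 * π) = g s + 2 * π) :
    MapsTo (confMap g) Strip Strip := by
  rintro ⟨τ, σ⟩ ⟨-, h0, hπ⟩
  simp only at h0 hπ
  have h1 : g (τ - σ) ≤ g (τ + σ) := hg (by linarith)
  have h2 : g (τ + σ) ≤ g (τ - σ + 2 * π) := hg (by linarith)
  rw [hper] at h2
  refine ⟨mem_univ _, ?_, ?_⟩ <;> simp only [confMap] <;> linarith

end Helpers

/-- existence of the light cone gauge.  If a smooth world sheet
satisfies the wave equation, Neumann boundary conditions, the constraints and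
`P⁺ = ∂X⁺/∂τ > 0`, then there is a conformal diffeomorphism Φ of the strip such
that `Y = X ∘ Φ⁻¹` still satisfies all these conditions and moreover
`Y⁺(τ,σ) = p⁺ τ` for some constant `p⁺ > 0`. -/
theorem exists_light_cone_gauge (d : ℕ) (hd : 2 ≤ d) (X : ℝ → ℝ → Fin d → ℝ)
    (hX : ContDiff ℝ (⊤ : ℕ∞) (fun z : ℝ × ℝ => X z.1 z.2))
    (hwave : ∀ τ σ, σ ∈ Icc (0:ℝ) π → pt (pt X) τ σ = ps (ps X) τ σ)
    (hbc : ∀ τ, ps X τ 0 = 0 ∧ ps X τ π = 0)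
    (hcon : ∀ τ σ, σ ∈ Icc (0:ℝ) π → ∀ ε : ℝ, ε = 1 ∨ ε = -1 →
      eta (pt X τ σ + ε • ps X τ σ) (pt X τ σ + ε • ps X τ σ) = 0)
    (hP : ∀ τ σ, σ ∈ Icc (0:ℝ) π →
      0 < deriv (fun t => (X t σ ⟨0, by omega⟩ + X t σ ⟨d-1, by omega⟩) / Real.sqrt 2) τ) :
    ∃ g : ℝ → ℝ, ContDiff ℝ (⊤ : ℕ∞) g ∧ StrictMono g ∧ (∀ s, g (s + 2*π) = g s + 2*π) ∧
      (Set.BijOn (confMap g) Strip Strip ∧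
        ∃ Ψ : ℝ × ℝ → ℝ × ℝ, ContDiffOn ℝ (⊤ : ℕ∞) Ψ Strip ∧
          (∀ z ∈ Strip, Ψ (confMap g z) = z) ∧ (∀ z ∈ Strip, confMap g (Ψ z) = z)) ∧
      ∃ Y : ℝ → ℝ → Fin d → ℝ, ContDiff ℝ (⊤ : ℕ∞) (fun z : ℝ × ℝ => Y z.1 z.2) ∧
        (∀ z ∈ Strip, Y (confMap g z).1 (confMap g z).2 = X z.1 z.2) ∧
        (∀ τ σ, σ ∈ Icc (0:ℝ) π → pt (pt Y) τ σ = ps (ps Y) τ σ) ∧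
        (∀ τ, ps Y τ 0 = 0 ∧ ps Y τ π = 0) ∧
        (∀ τ σ, σ ∈ Icc (0:ℝ) π → ∀ ε : ℝ, ε = 1 ∨ ε = -1 →
          eta (pt Y τ σ + ε • ps Y τ σ) (pt Y τ σ + ε • ps Y τ σ) = 0) ∧
        ∃ pp : ℝ, 0 < pp ∧ ∀ τ σ, σ ∈ Icc (0:ℝ) π →
          (Y τ σ ⟨0, by omega⟩ + Y τ σ ⟨d-1, by omega⟩) / Real.sqrt 2 = pp * τ := by
  obtain ⟨hXU, hUper'⟩ := dAlembert hX hwave hbc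
  set U : ℝ → Fin d → ℝ := fun s => X s 0 with hU
  have hUs : ContDiff ℝ (⊤ : ℕ∞) U := hX.comp (contDiff_id.prodMk contDiff_const)
  have hUd : Differentiable ℝ U := hUs.differentiable (by simp)
  have hUnull : ∀ s, eta (deriv U s) (deriv U s) = 0 := by
    intro s
    have h := hcon s 0 ⟨le_rfl, pi_pos.le⟩ 1 (Or.inl rfl)
    rw [(hbc s).1, smul_zero, add_zero] at h
    exact h
  obtain ⟨c, hc⟩ : ∃ c, ∀ s, U (s + 2 * π) = U s + c := by
    have hd : ∀ s, HasDerivAt (fun s => U (s + 2 * π) - U s) 0 s := by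
      intro s
      have h := ((hUd (s + 2 * π)).hasDerivAt.comp_add_const s (2 * π)).sub (hUd s).hasDerivAt
      rw [hUper' s, sub_self] at h
      exact h
    refine ⟨U (0 + 2 * π) - U 0, fun s => ?_⟩
    have h := is_const_of_deriv_eq_zero (fun s => (hd s).differentiableAt)
      (fun s => (hd s).deriv) s 0
    rw [← h]; abel
  set φ : ℝ → ℝ := fun s => (U s ⟨0, by omega⟩ + U s ⟨d-1, by omega⟩) / Real.sqrt 2 with hφ
  have hUi : ∀ i, ContDiff ℝ (⊤ : ℕ∞) (fun s => U s i) := fun i => contDiff_pi.mp hUs i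
  have hφs : ContDiff ℝ (⊤ : ℕ∞) φ := ((hUi _).add (hUi _)).div_const _
  have hφ' : ∀ s, 0 < deriv φ s := fun s => hP s 0 ⟨le_rfl, pi_pos.le⟩
  have hφmono : StrictMono φ := strictMono_of_deriv_pos hφ'
  set C : ℝ := (c ⟨0, by omega⟩ + c ⟨d-1, by omega⟩) / Real.sqrt 2 with hC
  have hφper : ∀ s, φ (s + 2 * π) = φ s + C := by
    intro s
    simp only [hφ, hC, hc, Pi.add_apply]; ring
  have hCpos : 0 < C := by
    have h1 := hφper 0
    have h2 : φ 0 < φ (0 + 2 * π) := hφmono (by linarith [pi_pos])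
    linarith
  -- `p` is normalised so that `g = φ / p` advances by exactly `2π` over one period
  set p : ℝ := C / (2 * π) with hp
  have hppos : 0 < p := by positivity
  have hCp : C = p * (2 * π) := by rw [hp]; field_simp
  set g : ℝ → ℝ := fun s => φ s / p with hg
  have hgs : ContDiff ℝ (⊤ : ℕ∞) g := hφs.div_const _
  have hg' : ∀ s, 0 < deriv g s := by
    intro s
    rw [hg, deriv_div_const]
    exact div_pos (hφ' s) hppos
  have hgmono : StrictMono g := strictMono_of_deriv_pos hg'
  have hgper : ∀ s, g (s + 2 * π) = g s + 2 * π := by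
    intro s
    simp only [hg, hφper, hCp]; field_simp
  obtain ⟨h, hhs, hhmono, hhper, hl, hr⟩ := exists_smooth_inverse hgs hg' hgper
  have hhd : Differentiable ℝ h := hhs.differentiable (by simp)
  have hφh : ∀ s, φ (h s) = p * s := by
    intro s
    have := hr s
    simp only [hg] at this
    rw [div_eq_iff hppos.ne'] at this
    rw [this]; ring
  set V : ℝ → Fin d → ℝ := U ∘ h with hV
  have hVs : ContDiff ℝ (⊤ : ℕ∞) V := hUs.comp hhs
  have hVd : Differentiable ℝ V := hVs.differentiable (by simp)
  have hV'd : Differentiable ℝ (deriv V) :=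
    (contDiff_infty_iff_deriv.mp hVs).2.differentiable (by simp)
  have hV' : ∀ s, deriv V s = deriv h s • deriv U (h s) := fun s =>
    ((hUd (h s)).hasDerivAt.scomp s (hhd s).hasDerivAt).deriv
  have hVnull : ∀ s, eta (deriv V s) (deriv V s) = 0 := by
    intro s
    rw [hV', eta_smul_self, hUnull, mul_zero]
  have hVper' : ∀ s, deriv V (s + 2 * π) = deriv V s := by
    intro s
    rw [← deriv_comp_add_const]
    have : (fun x => V (x + 2 * π)) = fun x => V x + c := by
      funext x; simp only [hV, Function.comp_apply, hhper, hc]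
    rw [this, deriv_add_const]
  have hmaps := confMap_mapsTo hgmono.monotone hgper
  have hmaps' := confMap_mapsTo hhmono hhper
  have hleft := confMap_left_inverse (g := g) (h := h) hl
  have hright := confMap_left_inverse (g := h) (h := g) hr
  have hsm : ContDiff ℝ (⊤ : ℕ∞) (confMap h) := by
    have h1 : ContDiff ℝ (⊤ : ℕ∞) (fun z : ℝ × ℝ => h (z.1 + z.2)) :=
      hhs.comp (contDiff_fst.add contDiff_snd)
    have h2 : ContDiff ℝ (⊤ : ℕ∞) (fun z : ℝ × ℝ => h (z.1 - z.2)) :=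
      hhs.comp (contDiff_fst.sub contDiff_snd)
    exact ((h1.add h2).div_const 2).prodMk ((h1.sub h2).div_const 2)
  refine ⟨g, hgs, hgmono, hgper, ⟨?_, confMap h, hsm.contDiffOn, fun z _ => hleft z,
    fun z _ => hright z⟩, sheet V, ?_, ?_, ?_, ?_, ?_, p, hppos, ?_⟩
  · exact InvOn.bijOn ⟨fun z _ => hleft z, fun z _ => hright z⟩ hmaps hmaps'
  · have h1 : ContDiff ℝ (⊤ : ℕ∞) (fun z : ℝ × ℝ => V (z.1 + z.2)) :=
      hVs.comp (contDiff_fst.add contDiff_snd)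
    have h2 : ContDiff ℝ (⊤ : ℕ∞) (fun z : ℝ × ℝ => V (z.1 - z.2)) :=
      hVs.comp (contDiff_fst.sub contDiff_snd)
    exact (h1.add h2).const_smul (2⁻¹ : ℝ)
  · rintro ⟨τ, σ⟩ ⟨-, hσ⟩
    rw [hXU τ σ hσ]
    have h1 : ∀ a b : ℝ, (a + b) / 2 + (a - b) / 2 = a := fun a b => by ring
    have h2 : ∀ a b : ℝ, (a + b) / 2 - (a - b) / 2 = b := fun a b => by ring
    simp only [sheet, confMap, h1, h2, hV, Function.comp_apply, hl]
  · intro τ σ _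
    rw [pt_sheet hVd, pt_sheet hV'd, ps_ps_sheet hVd hV'd]
  · intro τ
    rw [ps_sheet hVd, ps_sheet hVd]
    have h1 := hVper' (τ - π)
    rw [show τ - π + 2 * π = τ + π by ring] at h1
    simp [h1]
  · intro τ σ _ ε hε
    rw [pt_sheet hVd, ps_sheet hVd]
    rcases hε with rfl | rfl
    · convert hVnull (τ + σ) using 2 <;> simp only [sheet] <;> module
    · convert hVnull (τ - σ) using 2 <;> simp only [sheet] <;> module
  · intro τ σ _
    have h1 := hφh (τ + σ)
    have h2 := hφh (τ - σ)
    simp only [hφ] at h1 h2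
    simp only [sheet, hV, Function.comp_apply, Pi.smul_apply, Pi.add_apply, smul_eq_mul]
    linear_combination (h1 + h2) / 2
end
end

section
/- Let d ≥ 3 and let X : ℝ × [0,π] → ℝ^d be a smooth solution of the wave equation ∂²X/∂τ² = ∂²X/∂σ² with Neumann boundary conditions, satisfying the constraints η(∂X/∂τ ± ∂X/∂σ, ∂X/∂τ ± ∂X/∂σ) = 0 and the light cone gauge condition X⁺(τ,σ) = p⁺ τ with p⁺ > 0. Fix τ and define p⁻ = (1/π)∫₀^π ∂X⁻/∂τ(τ,σ) dσ, and for the transverse components k = 1,…,d−2 define p^k = (1/π)∫₀^π ∂X^k/∂τ dσ and, for n ≥ 1, xₙ^k = (√2/π)∫₀^π X^k cos(nσ) dσ, pₙ^k = (√2/π)∫₀^π ∂X^k/∂τ cos(nσ) dσ. Then p⁻ = (1/(2p⁺)) ( Σ_{k=1}^{d−2}(p^k)² + Σ_{n=1}^∞ Σ_{k=1}^{d−2} ((pₙ^k)² + n²(xₙ^k)²) ), the series converging. -/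
/-!
Write `Ẋ = ∂X/∂τ` and `X' = ∂X/∂σ`. The sum of the two constraints is `η(Ẋ, Ẋ) + η(X', X') = 0`,
and in light cone components `η(x, x) = -2 x⁺ x⁻ + Σ (x^k)²`. The gauge condition gives `Ẋ⁺ = p⁺`
and `X'⁺ = 0`, so `Ẋ⁻ = (1/(2p⁺)) Σ ((Ẋ^k)² + (X'^k)²)` pointwise in `σ` (`pt_minus_eq`).

Averaging over `[0, π]` reduces the claim to Parseval's identity for the cosine series of `Ẋ^k` and
the sine series of `X'^k`. Both are obtained at once (`hasSum_cos_sin`) from Parseval on `[-π, π]`,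
applied to the even extension of `Ẋ^k` plus the odd extension of `X'^k` (`unfolded`). Integration by
parts (`integral_ps_mul_sin`) turns the sine coefficients of `X'^k` into `-n` times the cosine
coefficients of `X^k`.
-/

open Real Set intervalIntegral

noncomputable section

/-! ### Parseval on the half interval -/

open MeasureTheory in
/-- An integral over `[-π, π]` of a function given by `B` left of `0` and by `A` right of `0`,
folded onto `[0, π]`. The value at `0` is irrelevant. -/
lemma integral_fold (F A B : ℝ → ℂ) (hA : Continuous A) (hB : Continuous B)
    (hFA : ∀ x, 0 < x → F x = A x) (hFB : ∀ x, x < 0 → F x = B x) :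
    ∫ x in (-π)..π, F x = ∫ x in (0:ℝ)..π, (A x + B (-x)) := by
  have eA : ∀ x ∈ Ioo (0:ℝ) π, A x = F x := fun x hx => (hFA x hx.1).symm
  have eB : ∀ x ∈ Ioo (-π) 0, B x = F x := fun x hx => (hFB x hx.2).symm
  have iA : IntervalIntegrable F volume 0 π :=
    (hA.intervalIntegrable 0 π).congr_uIoo (by rw [uIoo_of_le pi_pos.le]; exact eA)
  have iB : IntervalIntegrable F volume (-π) 0 :=
    (hB.intervalIntegrable (-π) 0).congr_uIoo (by
      rw [uIoo_of_le (by linarith [pi_pos])]; exact eB)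
  rw [← integral_add_adjacent_intervals iB iA,
    ← integral_congr_Ioo_of_le pi_pos.le eA,
    ← integral_congr_Ioo_of_le (by linarith [pi_pos]) eB,
    intervalIntegral.integral_add (g := fun x => B (-x)) (hA.intervalIntegrable _ _)
      ((hB.comp continuous_neg).intervalIntegrable _ _),
    intervalIntegral.integral_comp_neg (fun x => B x), neg_zero, add_comm]

/-- The function on `[-π, π]` obtained by adding the even extension of `f` and the odd extension of
`g` from `[0, π]`. For `f = ∂X/∂τ`, `g = ∂X/∂σ` it is the profile of the wave `∂X/∂τ + ∂X/∂σ`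
moving in one direction. -/
def unfolded (f g : ℝ → ℝ) (x : ℝ) : ℂ :=
  if 0 ≤ x then ((f x + g x : ℝ) : ℂ) else ((f (-x) - g (-x) : ℝ) : ℂ)

open MeasureTheory in
lemma memLp_unfolded {f g : ℝ → ℝ} (hf : Continuous f) (hg : Continuous g) :
    MemLp (unfolded f g) 2 (volume.restrict (Ioc (-π) π)) := by
  have hm : Measurable (unfolded f g) := by
    unfold unfolded
    refine Measurable.ite measurableSet_Ici ?_ ?_
    · exact (Complex.continuous_ofReal.comp (hf.add hg)).measurable
    · exact (Complex.continuous_ofReal.comp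
        ((hf.comp continuous_neg).sub (hg.comp continuous_neg))).measurable
  obtain ⟨C, hC⟩ := isCompact_Icc.exists_bound_of_continuousOn (s := Icc (0:ℝ) π)
    (f := fun x => |f x| + |g x|) (by fun_prop)
  refine MemLp.of_bound hm.aestronglyMeasurable C ?_
  refine (ae_restrict_iff' measurableSet_Ioc).2 (ae_of_all _ fun x hx => ?_)
  unfold unfolded
  split_ifs with h
  · have := (le_abs_self _).trans (hC x ⟨h, hx.2⟩)
    rw [Complex.norm_real, norm_eq_abs]
    exact (abs_add_le _ _).trans this
  · have := (le_abs_self _).trans (hC (-x) ⟨by linarith, by linarith [hx.1]⟩)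
    rw [Complex.norm_real, norm_eq_abs]
    exact (abs_sub _ _).trans this

/-- The even part contributes the cosine integrals of `f` (real part), the odd part the sine
integrals of `g` (imaginary part). -/
lemma fourierCoeffOn_unfolded {f g : ℝ → ℝ} (hf : Continuous f) (hg : Continuous g)
    (hab : -π < π) (n : ℤ) :
    fourierCoeffOn hab (unfolded f g) n =
      ((π⁻¹ * ∫ x in (0:ℝ)..π, f x * cos (n * x) : ℝ) : ℂ) -
        ((π⁻¹ * ∫ x in (0:ℝ)..π, g x * sin (n * x) : ℝ) : ℂ) * Complex.I := by
  have hexp : ∀ x : ℝ, (fourier (-n) (x : AddCircle (π - -π)) : ℂ) =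
      Complex.exp (-(n * x * Complex.I)) := by
    intro x
    rw [fourier_coe_apply]
    congr 1
    have : (π : ℂ) ≠ 0 := by exact_mod_cast pi_ne_zero
    push_cast
    field_simp
    ring
  have h := integral_fold (fun x => fourier (-n) (x : AddCircle (π - -π)) • unfolded f g x)
    (fun x => Complex.exp (-(n * x * Complex.I)) * ((f x + g x : ℝ) : ℂ))
    (fun x => Complex.exp (-(n * x * Complex.I)) * ((f (-x) - g (-x) : ℝ) : ℂ))
    (by fun_prop) (by fun_prop)
    (fun x hx => by simp only [unfolded, if_pos hx.le, hexp, smul_eq_mul])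
    (fun x hx => by simp only [unfolded, if_neg hx.not_ge, hexp, smul_eq_mul])
  have hsum : ∀ x : ℝ, Complex.exp (-(n * x * Complex.I)) * ((f x + g x : ℝ) : ℂ) +
      Complex.exp (-(n * (-x : ℝ) * Complex.I)) * ((f (- -x) - g (- -x) : ℝ) : ℂ) =
      2 * ((f x * cos (n * x) : ℝ) : ℂ) - 2 * Complex.I * ((g x * sin (n * x) : ℝ) : ℂ) := by
    intro x
    have e1 : Complex.exp (-(n * x * Complex.I)) =
        Complex.cos (n * x) - Complex.sin (n * x) * Complex.I := by
      rw [← neg_mul, Complex.exp_mul_I, Complex.cos_neg, Complex.sin_neg]; ring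
    have e2 : Complex.exp (-(n * (-x : ℝ) * Complex.I)) =
        Complex.cos (n * x) + Complex.sin (n * x) * Complex.I := by
      rw [← Complex.exp_mul_I]; congr 1; push_cast; ring
    rw [e1, e2, neg_neg]
    push_cast
    ring
  rw [fourierCoeffOn_eq_integral, h]
  simp_rw [hsum]
  rw [integral_sub (Continuous.intervalIntegrable (by fun_prop) _ _)
    (Continuous.intervalIntegrable (by fun_prop) _ _),
    intervalIntegral.integral_const_mul, intervalIntegral.integral_const_mul,
    intervalIntegral.integral_ofReal, intervalIntegral.integral_ofReal, Complex.real_smul]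
  have : (π : ℂ) ≠ 0 := by exact_mod_cast pi_ne_zero
  push_cast
  field_simp
  ring

lemma integral_norm_sq_unfolded {f g : ℝ → ℝ} (hf : Continuous f) (hg : Continuous g) :
    ∫ x in (-π)..π, ‖unfolded f g x‖ ^ 2 = 2 * ∫ x in (0:ℝ)..π, (f x ^ 2 + g x ^ 2) := by
  have h := integral_fold (fun x => ((‖unfolded f g x‖ ^ 2 : ℝ) : ℂ))
    (fun x => (((f x + g x) ^ 2 : ℝ) : ℂ)) (fun x => (((f (-x) - g (-x)) ^ 2 : ℝ) : ℂ))
    (by fun_prop) (by fun_prop)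
    (fun x hx => by simp only [unfolded, if_pos hx.le, Complex.norm_real, norm_eq_abs, sq_abs])
    (fun x hx => by simp only [unfolded, if_neg hx.not_ge, Complex.norm_real, norm_eq_abs, sq_abs])
  simp_rw [← Complex.ofReal_add] at h
  rw [intervalIntegral.integral_ofReal, intervalIntegral.integral_ofReal] at h
  rw [Complex.ofReal_injective h, ← intervalIntegral.integral_const_mul]
  congr 1
  ext x
  rw [neg_neg]
  ring

/-- Parseval's identity on `[0, π]`, for the cosine series of `f` and the sine series of `g`
simultaneously. -/
lemma hasSum_cos_sin {f g : ℝ → ℝ} (hf : Continuous f) (hg : Continuous g) :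
    HasSum (fun n : ℕ =>
      (√2 / π * ∫ x in (0:ℝ)..π, f x * cos ((n + 1 : ℕ) * x)) ^ 2 +
      (√2 / π * ∫ x in (0:ℝ)..π, g x * sin ((n + 1 : ℕ) * x)) ^ 2)
      (π⁻¹ * (∫ x in (0:ℝ)..π, (f x ^ 2 + g x ^ 2)) -
        (π⁻¹ * ∫ x in (0:ℝ)..π, f x) ^ 2) := by
  have hab : -π < π := by linarith [pi_pos]
  have h := hasSum_sq_fourierCoeffOn hab (memLp_unfolded hf hg)
  have hn : ∀ n : ℤ, ‖fourierCoeffOn hab (unfolded f g) n‖ ^ 2 =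
      (π⁻¹ * ∫ x in (0:ℝ)..π, f x * cos (n * x)) ^ 2 +
        (π⁻¹ * ∫ x in (0:ℝ)..π, g x * sin (n * x)) ^ 2 := by
    intro n
    rw [fourierCoeffOn_unfolded hf hg, Complex.sq_norm, Complex.normSq_apply]
    simp
    ring
  simp_rw [hn] at h
  rw [integral_norm_sq_unfolded hf hg] at h
  -- Fold the sum over `ℤ` onto `ℕ` and drop the term `n = 0`, which `nat_add_neg` counts twice.
  have h2 := (hasSum_nat_add_iff' 1).2 h.nat_add_neg
  have hs : √2 ^ 2 = (2:ℝ) := sq_sqrt (by norm_num)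
  convert h2 using 1
  -- two instance paths to `AddCommMonoid ℝ`
  · rfl
  · ext n
    push_cast
    simp only [neg_mul, cos_neg, sin_neg, mul_neg,
      intervalIntegral.integral_neg, neg_sq, mul_pow, div_pow, hs]
    ring
  · simp
    field_simp
    ring

/-! ### Calculus and constraints on the world sheet -/

section WorldSheet
variable {d : ℕ} {X : ℝ → ℝ → Fin d → ℝ}

lemma hasDerivAt_pt (hX : ContDiff ℝ (⊤ : ℕ∞) (fun z : ℝ × ℝ => X z.1 z.2)) (τ σ : ℝ)
    (k : Fin d) : HasDerivAt (fun t => X t σ k) (pt X τ σ k) τ := by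
  have h : Differentiable ℝ (fun t => X t σ) :=
    (hX.differentiable (by simp)).comp (g := fun z : ℝ × ℝ => X z.1 z.2)
      (f := fun t => (t, σ)) (by fun_prop)
  exact hasDerivAt_pi.1 (h τ).hasDerivAt k

lemma hasDerivAt_ps (hX : ContDiff ℝ (⊤ : ℕ∞) (fun z : ℝ × ℝ => X z.1 z.2)) (τ σ : ℝ)
    (k : Fin d) : HasDerivAt (fun s => X τ s k) (ps X τ σ k) σ := by
  have h : Differentiable ℝ (fun s => X τ s) :=
    (hX.differentiable (by simp)).comp (g := fun z : ℝ × ℝ => X z.1 z.2)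
      (f := fun s => (τ, s)) (by fun_prop)
  exact hasDerivAt_pi.1 (h σ).hasDerivAt k

lemma continuous_pt (hX : ContDiff ℝ (⊤ : ℕ∞) (fun z : ℝ × ℝ => X z.1 z.2)) (τ : ℝ)
    (k : Fin d) : Continuous fun σ => pt X τ σ k := by
  have e : (fun σ => pt X τ σ) =
      fun σ => fderiv ℝ (fun z : ℝ × ℝ => X z.1 z.2) (τ, σ) (1, 0) := by
    ext1 σ
    have h := (hX.differentiable (by simp) (τ, σ)).hasFDerivAt.comp_hasDerivAt τ
      ((hasDerivAt_id τ).prodMk (hasDerivAt_const τ σ))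
    exact h.deriv
  have hc : Continuous fun σ => pt X τ σ := by
    rw [e]
    exact ((hX.continuous_fderiv (by simp)).comp (by fun_prop)).clm_apply continuous_const
  exact (continuous_apply k).comp hc

lemma continuous_ps (hX : ContDiff ℝ (⊤ : ℕ∞) (fun z : ℝ × ℝ => X z.1 z.2)) (τ : ℝ)
    (k : Fin d) : Continuous fun σ => ps X τ σ k := by
  have hc : Continuous fun σ => ps X τ σ :=
    ((hX.comp (contDiff_prodMk_right τ)).continuous_deriv (by simp))
  exact (continuous_apply k).comp hc

/-- Integration by parts; the boundary terms vanish because `sin (n σ)` does at `0` and `π`. -/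
lemma integral_ps_mul_sin (hX : ContDiff ℝ (⊤ : ℕ∞) (fun z : ℝ × ℝ => X z.1 z.2)) (τ : ℝ)
    (k : Fin d) (n : ℕ) :
    ∫ σ in (0:ℝ)..π, ps X τ σ k * sin (n * σ) =
      -(n * ∫ σ in (0:ℝ)..π, X τ σ k * cos (n * σ)) := by
  have hs : ∀ σ : ℝ, HasDerivAt (fun s : ℝ => sin (n * s)) (n * cos (n * σ)) σ := by
    intro σ
    have h := ((hasDerivAt_id σ).const_mul (n : ℝ)).sin
    simp only [id, mul_one] at h
    rwa [mul_comm] at h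
  have h := integral_deriv_mul_eq_sub
    (u := fun σ => X τ σ k) (v := fun σ : ℝ => sin (n * σ)) (a := 0) (b := π)
    (fun σ _ => hasDerivAt_ps hX τ σ k)
    (fun σ _ => hs σ) ((continuous_ps hX τ k).intervalIntegrable _ _)
    (Continuous.intervalIntegrable (by fun_prop) _ _)
  have hXc : Continuous fun σ => X τ σ k :=
    continuous_iff_continuousAt.2 fun σ => (hasDerivAt_ps hX τ σ k).continuousAt
  have hSc := continuous_ps hX τ k
  rw [intervalIntegral.integral_add (Continuous.intervalIntegrable (by fun_prop) _ _)
    (Continuous.intervalIntegrable (by fun_prop) _ _)] at h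
  simp only [sin_nat_mul_pi, mul_zero, sin_zero, sub_zero, mul_left_comm _ (n : ℝ),
    intervalIntegral.integral_const_mul] at h
  linarith

/-- Splitting the two light cone directions off a sum over all components. These are
indices `i`, `j` of values `0` and `d - 1`. -/
lemma sum_eq_ends_add_transverse (hd : 3 ≤ d) {i j : Fin d}
    (hi : i.val = 0) (hj : j.val = d - 1) (a : Fin d → ℝ) :
    ∑ k, a k = a i + a j +
      ∑ k : Fin d, if 1 ≤ k.val ∧ k.val ≤ d - 2 then a k else 0 := by
  have h : ∀ k : Fin d, a k = (if k = i then a k else 0) +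
      (if k = j then a k else 0) +
      (if 1 ≤ k.val ∧ k.val ≤ d - 2 then a k else 0) := by
    intro k
    have hk := k.isLt
    simp only [Fin.ext_iff, hi, hj]
    split_ifs <;> first | omega | simp
  conv_lhs => rw [Finset.sum_congr rfl fun k _ => h k]
  simp [Finset.sum_add_distrib]

/-- The quadratic form of `η` in light cone components, `-2 x⁺ x⁻ + Σ (x^k)²`, with the factors
`√2` cleared. -/
lemma eta_self (hd : 3 ≤ d) {i j : Fin d}
    (hi : i.val = 0) (hj : j.val = d - 1) (x : Fin d → ℝ) :
    eta x x = -((x i + x j) *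
        (x i - x j)) +
      ∑ k : Fin d, if 1 ≤ k.val ∧ k.val ≤ d - 2 then x k ^ 2 else 0 := by
  rw [eta, sum_eq_ends_add_transverse hd hi hj]
  have h1 : d - 1 ≠ 0 := by omega
  have h2 : ∀ k : Fin d, (if 1 ≤ k.val ∧ k.val ≤ d - 2 then
      (if k.val = 0 then -(x k * x k) else x k * x k) else 0) =
      if 1 ≤ k.val ∧ k.val ≤ d - 2 then x k ^ 2 else 0 := by
    intro k
    split_ifs <;> first | omega | ring
  simp only [h2, hi, hj, h1, if_true, if_false]
  ring

/-- The constraints solved for `∂X⁻/∂τ` in the light cone gauge. Adding the two constraints gives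
`η(Ẋ, Ẋ) + η(X', X') = 0`, where `Ẋ⁺ = p⁺` and `X'⁺ = 0`. The point `σ` is taken in the open
interval because `X'⁺ = 0` is obtained by differentiating the gauge condition in `σ`. -/
lemma pt_minus_eq (hd : 3 ≤ d) {i j : Fin d}
    (hi : i.val = 0) (hj : j.val = d - 1) (hX : ContDiff ℝ (⊤ : ℕ∞) (fun z : ℝ × ℝ => X z.1 z.2))
    (hcon : ∀ τ σ, σ ∈ Icc (0:ℝ) π → ∀ ε : ℝ, ε = 1 ∨ ε = -1 →
      eta (pt X τ σ + ε • ps X τ σ) (pt X τ σ + ε • ps X τ σ) = 0)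
    {pp : ℝ} (hpp : 0 < pp)
    (hgauge : ∀ τ σ, σ ∈ Icc (0:ℝ) π →
      (X τ σ i + X τ σ j) / Real.sqrt 2 = pp * τ)
    (τ σ : ℝ) (hσ : σ ∈ Ioo (0:ℝ) π) :
    deriv (fun t => (X t σ i - X t σ j) / Real.sqrt 2) τ =
      (1 / (2 * pp)) * ∑ k : Fin d, if 1 ≤ k.val ∧ k.val ≤ d - 2 then
        pt X τ σ k ^ 2 + ps X τ σ k ^ 2 else 0 := by
  have hσ' := Ioo_subset_Icc_self hσ
  have h2 : √2 ≠ 0 := by positivity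
  have hsq : √2 * √2 = (2:ℝ) := mul_self_sqrt (by norm_num)
  have hP : pt X τ σ i + pt X τ σ j = √2 * pp := by
    have h := ((hasDerivAt_pt hX τ σ i).add
      (hasDerivAt_pt hX τ σ j)).div_const √2
    have h' : HasDerivAt (fun t => (X t σ i + X t σ j) / √2) pp τ := by
      simp only [hgauge _ σ hσ']
      simpa using (hasDerivAt_id τ).const_mul pp
    have := h.unique h'
    field_simp at this
    exact this
  have hS : ps X τ σ i + ps X τ σ j = 0 := by
    have h := ((hasDerivAt_ps hX τ σ i).add
      (hasDerivAt_ps hX τ σ j)).div_const √2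
    have h' : HasDerivAt (fun s => (X τ s i + X τ s j) / √2) 0 σ := by
      refine (hasDerivAt_const σ (pp * τ)).congr_of_eventuallyEq ?_
      filter_upwards [Ioo_mem_nhds hσ.1 hσ.2] with s hs
      exact hgauge τ s (Ioo_subset_Icc_self hs)
    have := h.unique h'
    field_simp at this
    simpa using this
  have hp := hcon τ σ hσ' 1 (Or.inl rfl)
  have hm := hcon τ σ hσ' (-1) (Or.inr rfl)
  rw [eta_self hd hi hj] at hp hm
  simp only [Pi.add_apply, Pi.smul_apply, smul_eq_mul] at hp hm
  have hsum : (∑ k : Fin d, if 1 ≤ k.val ∧ k.val ≤ d - 2 then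
        (pt X τ σ k + 1 * ps X τ σ k) ^ 2 else 0) +
      (∑ k : Fin d, if 1 ≤ k.val ∧ k.val ≤ d - 2 then
        (pt X τ σ k + -1 * ps X τ σ k) ^ 2 else 0) =
      2 * ∑ k : Fin d, if 1 ≤ k.val ∧ k.val ≤ d - 2 then
        pt X τ σ k ^ 2 + ps X τ σ k ^ 2 else 0 := by
    rw [← Finset.sum_add_distrib, Finset.mul_sum]
    refine Finset.sum_congr rfl fun k _ => ?_
    split_ifs <;> ring
  have hd' : deriv (fun t => (X t σ i - X t σ j) / √2) τ =
      (pt X τ σ i - pt X τ σ j) / √2 :=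
    (((hasDerivAt_pt hX τ σ i).sub
      (hasDerivAt_pt hX τ σ j)).div_const √2).deriv
  rw [hd']
  generalize (∑ k : Fin d, if 1 ≤ k.val ∧ k.val ≤ d - 2 then
        pt X τ σ k ^ 2 + ps X τ σ k ^ 2 else 0) = E at hsum ⊢
  generalize pt X τ σ i = P0 at *
  generalize pt X τ σ j = P1 at *
  generalize ps X τ σ i = S0 at *
  generalize ps X τ σ j = S1 at *
  have key : √2 * pp * (P0 - P1) = E := by
    rw [← hP]
    linear_combination (-1/2) * (hp + hm - hsum) - (S0 - S1) * hS
  rw [div_eq_iff h2, ← key]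
  field_simp
  linear_combination (-(P0 - P1)) * hsq
end WorldSheet

/-- in the light cone gauge the Hamiltonian
`p⁻ = (1/(2p⁺)) ( p̃² + Σ_{n≥1}(p̃ₙ² + n² x̃ₙ²) )`, the series converging;
here the coefficients are the cosine coefficients of the transverse components
and of `∂X⁻/∂τ`, all evaluated at a fixed `τ₀`. -/
theorem light_cone_hamiltonian (d : ℕ) (hd : 3 ≤ d)
    (X : ℝ → ℝ → Fin d → ℝ)
    (hX : ContDiff ℝ (⊤ : ℕ∞) (fun z : ℝ × ℝ => X z.1 z.2))
    (hwave : ∀ τ σ, σ ∈ Icc (0:ℝ) π → pt (pt X) τ σ = ps (ps X) τ σ)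
    (hbc : ∀ τ, ps X τ 0 = 0 ∧ ps X τ π = 0)
    (hcon : ∀ τ σ, σ ∈ Icc (0:ℝ) π → ∀ ε : ℝ, ε = 1 ∨ ε = -1 →
      eta (pt X τ σ + ε • ps X τ σ) (pt X τ σ + ε • ps X τ σ) = 0)
    (pp : ℝ) (hpp : 0 < pp)
    (hgauge : ∀ τ σ, σ ∈ Icc (0:ℝ) π →
      (X τ σ ⟨0, by omega⟩ + X τ σ ⟨d-1, by omega⟩) / Real.sqrt 2 = pp * τ)
    (τ₀ : ℝ)
    -- `p⁻` : zeroth cosine coefficient of ∂X⁻/∂τ at τ₀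
    (pminus : ℝ)
    (hpminus : pminus = (π : ℝ)⁻¹ *
      ∫ σ in (0:ℝ)..π,
        deriv (fun t => (X t σ ⟨0, by omega⟩ - X t σ ⟨d-1, by omega⟩) / Real.sqrt 2) τ₀)
    -- transverse momenta `p^k`
    (pk : Fin d → ℝ)
    (hpk : ∀ k, pk k = (π : ℝ)⁻¹ * ∫ σ in (0:ℝ)..π, deriv (fun t => X t σ k) τ₀)
    -- transverse internal coordinates `xₙ^k` and momenta `pₙ^k`
    (xnk pnk : ℕ → Fin d → ℝ)
    (hxnk : ∀ n k, xnk n k = (Real.sqrt 2 / π) * ∫ σ in (0:ℝ)..π, X τ₀ σ k * Real.cos (n * σ))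
    (hpnk : ∀ n k, pnk n k = (Real.sqrt 2 / π) *
      ∫ σ in (0:ℝ)..π, deriv (fun t => X t σ k) τ₀ * Real.cos (n * σ)) :
    Summable (fun n : ℕ => ∑ k : Fin d, if 1 ≤ k.val ∧ k.val ≤ d - 2 then
        (pnk (n+1) k)^2 + ((n+1 : ℕ) : ℝ)^2 * (xnk (n+1) k)^2 else 0) ∧
    pminus = (1 / (2 * pp)) *
      ((∑ k : Fin d, if 1 ≤ k.val ∧ k.val ≤ d - 2 then (pk k)^2 else 0) +
        ∑' n : ℕ, ∑ k : Fin d, if 1 ≤ k.val ∧ k.val ≤ d - 2 then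
          (pnk (n+1) k)^2 + ((n+1 : ℕ) : ℝ)^2 * (xnk (n+1) k)^2 else 0) := by
  have hPc := continuous_pt hX τ₀
  have hSc := continuous_ps hX τ₀
  have hpt : ∀ σ k, deriv (fun t => X t σ k) τ₀ = pt X τ₀ σ k :=
    fun σ k => (hasDerivAt_pt hX τ₀ σ k).deriv
  simp only [hpt] at hpk hpnk
  have hmode : ∀ k, HasSum (fun n : ℕ => pnk (n+1) k ^ 2 + ((n+1 : ℕ) : ℝ)^2 * xnk (n+1) k ^ 2)
      (π⁻¹ * (∫ σ in (0:ℝ)..π, (pt X τ₀ σ k ^ 2 + ps X τ₀ σ k ^ 2)) - pk k ^ 2) := by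
    intro k
    have h := hasSum_cos_sin (hPc k) (hSc k)
    rw [← hpk] at h
    convert h using 2 with n
    rw [integral_ps_mul_sin hX, hpnk, hxnk]
    ring
  have hsum : HasSum (fun n : ℕ => ∑ k : Fin d, if 1 ≤ k.val ∧ k.val ≤ d - 2 then
        (pnk (n+1) k)^2 + ((n+1 : ℕ) : ℝ)^2 * (xnk (n+1) k)^2 else 0)
      (∑ k : Fin d, if 1 ≤ k.val ∧ k.val ≤ d - 2 then
        π⁻¹ * (∫ σ in (0:ℝ)..π, (pt X τ₀ σ k ^ 2 + ps X τ₀ σ k ^ 2)) - pk k ^ 2 else 0) := by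
    refine hasSum_sum fun k _ => ?_
    split_ifs
    · exact hmode k
    · exact hasSum_zero
  refine ⟨hsum.summable, ?_⟩
  rw [hsum.tsum_eq, ← Finset.sum_add_distrib, hpminus,
    integral_congr_Ioo_of_le pi_pos.le (fun σ hσ => pt_minus_eq hd rfl rfl hX hcon hpp hgauge τ₀ σ hσ),
    intervalIntegral.integral_const_mul, intervalIntegral.integral_finsetSum]
  · rw [mul_left_comm, Finset.mul_sum]
    congr 1
    refine Finset.sum_congr rfl fun k _ => ?_
    split_ifs
    · ring
    · simp
  · intro k _
    refine Continuous.intervalIntegrable ?_ _ _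
    have := hPc k
    have := hSc k
    split_ifs <;> fun_prop
end
end

section
/- Let d ≥ 2 and r ∈ ℝ. For every F ∈ C_c^∞(ℝ^d, ℝ) there exist unique smooth functions G^+ and G^− on ℝ^d such that (∂₀² − Δ + r)G^± = F, where Δ is the Laplacian in the variables x¹,…,x^{d−1}, and supp G^+ ⊆ J^+(supp F), supp G^− ⊆ J^−(supp F). (These are the retarded and advanced solutions E^±F of the Klein–Gordon equation.) -/
/-!
Put `a = |r| + 2`. Writing `G = e^{at} H` turns `(∂₀² - Δ + r) G = F` into
`((∂₀ + a)² - Δ + r) H = e^{-at} F`. The Fourier symbol `(a + 2πi ξ₀)² + |2π ξ⃗|² + r` of the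
conjugated operator has no real zeros, and its inverse has temperate growth, since
`|symbol|² = (a² + r)² (1 + |v(ξ)|²)` for an explicit polynomial vector `v`. Hence the conjugated
equation has a Schwartz solution `H` (`exists_twisted_solution`); the weight `e^{at}` with `a > 0`
singles out the solution that decays towards the past.

Supports and uniqueness both come from one energy estimate. For a weight `w ≥ 0` whose gradient is
causal with `∂₀w ≤ 0`, the divergence of the `w`-weighted energy current of a solution of the
homogeneous conjugated equation is at most `-w` times a positive definite energy density
(`divergence_le`). The integral of a divergence is zero, so `H = 0` where `w > 0`
(`energy_vanishing`). The weights used are smoothed indicators of backward light cones. For Schwartz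
`H` this shows that `H` vanishes at every point whose backward cone misses the source
(`schwartz_vanishing`), i.e. `supp G ⊆ J⁺(supp F)`. For the difference of two retarded solutions,
which vanishes at early times, the current has compact support and the difference is zero
(`compact_vanishing`). The advanced case follows by time reversal.
-/

open Real Set MeasureTheory

noncomputable section

/-- time derivative `∂₀U` of a function on ℝ^d = ℝ × ℝ^{d−1}. -/
def d0 {m : ℕ} (U : ℝ × (Fin m → ℝ) → ℝ) : ℝ × (Fin m → ℝ) → ℝ :=
  fun z => fderiv ℝ U z (1, 0)

/-- spatial derivative `∂ₖU`. -/
def dk {m : ℕ} (k : Fin m) (U : ℝ × (Fin m → ℝ) → ℝ) : ℝ × (Fin m → ℝ) → ℝ :=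
  fun z => fderiv ℝ U z (0, Pi.single k 1)

/-- Klein–Gordon operator `∂₀² − Δ + r` with mass-squared `r`. -/
def KG {m : ℕ} (r : ℝ) (U : ℝ × (Fin m → ℝ) → ℝ) : ℝ × (Fin m → ℝ) → ℝ :=
  fun z => d0 (d0 U) z - (∑ k, dk k (dk k U) z) + r * U z

/-- Minkowski form `η(z,w) = −z⁰w⁰ + z⃗·w⃗`. -/
def mink {m : ℕ} (z w : ℝ × (Fin m → ℝ)) : ℝ := -(z.1 * w.1) + ∑ k, z.2 k * w.2 k

/-- causal future `J⁺(S)`. -/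
def Jplus {m : ℕ} (S : Set (ℝ × (Fin m → ℝ))) : Set (ℝ × (Fin m → ℝ)) :=
  {z | ∃ w ∈ S, mink (z - w) (z - w) ≤ 0 ∧ 0 ≤ z.1 - w.1}

/-- causal past `J⁻(S)`. -/
def Jminus {m : ℕ} (S : Set (ℝ × (Fin m → ℝ))) : Set (ℝ × (Fin m → ℝ)) :=
  {z | ∃ w ∈ S, mink (z - w) (z - w) ≤ 0 ∧ 0 ≤ -(z.1 - w.1)}

/-- spatially compactly supported. -/
def SpatCompact {m : ℕ} (U : ℝ × (Fin m → ℝ) → ℝ) : Prop :=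
  ∀ T > (0:ℝ), IsCompact (tsupport U ∩ (Icc (-T) T ×ˢ (univ : Set (Fin m → ℝ))))

/-- the symplectic form `σ_t(U,V) = ∫ (U ∂₀V − ∂₀U V)(t,x⃗) dx⃗`. -/
def sigmaT {m : ℕ} (t : ℝ) (U V : ℝ × (Fin m → ℝ) → ℝ) : ℝ :=
  ∫ x : Fin m → ℝ, (U (t, x) * d0 V (t, x) - d0 U (t, x) * V (t, x))

open scoped SchwartzMap FourierTransform LineDeriv ContDiff

/-! ### The Fourier symbol of the conjugated operator -/

/-- Spacetime with its Euclidean inner product, as needed for the Fourier transform: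
`none` is the time index, `some k` the spatial indices. -/
abbrev STSpace (m : ℕ) : Type := EuclideanSpace ℝ (Option (Fin m))

/-- The unit vector of `STSpace m` in direction `i`. -/
def stBasis {m : ℕ} (i : Option (Fin m)) : STSpace m := EuclideanSpace.single i 1

/-- The Fourier symbol `(a + 2πi ξ₀)² + |2π ξ⃗|² + r` of the conjugated operator `KGtw a r`,
in the convention where `∂ⱼ` becomes multiplication by `2πi ξⱼ`. -/
def kgSymbol {m : ℕ} (a r : ℝ) (ξ : STSpace m) : ℂ :=
  ((a : ℂ) + 2 * π * Complex.I * (ξ none : ℂ)) ^ 2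
    + ((∑ k : Fin m, (2 * π * ξ (some k)) ^ 2 : ℝ) : ℂ) + r

lemma temperate_coord {m : ℕ} (i : Option (Fin m)) :
    (fun ξ : STSpace m => ξ i).HasTemperateGrowth :=
  (EuclideanSpace.proj i : STSpace m →L[ℝ] ℝ).hasTemperateGrowth

lemma temperate_sum_sq {m : ℕ} :
    (fun ξ : STSpace m => ∑ k : Fin m, (2 * π * ξ (some k)) ^ 2).HasTemperateGrowth := by
  refine Function.HasTemperateGrowth.sum fun k _ => ?_
  exact ((Function.HasTemperateGrowth.const (2 * π)).mul (temperate_coord (some k))).pow 2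

lemma temperate_symbol {m : ℕ} (a r : ℝ) :
    (kgSymbol a r : STSpace m → ℂ).HasTemperateGrowth := by
  unfold kgSymbol
  refine Function.HasTemperateGrowth.add (Function.HasTemperateGrowth.add ?_ ?_) (.const _)
  · refine Function.HasTemperateGrowth.pow (Function.HasTemperateGrowth.add (.const _) ?_) 2
    exact (Function.HasTemperateGrowth.const _).mul
      (Function.Complex.hasTemperateGrowth_ofReal.comp (temperate_coord none))
  · exact Function.Complex.hasTemperateGrowth_ofReal.comp temperate_sum_sq

/-- A polynomial vector field with `|kgSymbol|² = (a² + r)² (1 + ‖symbolVec‖²)`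
(see `normSq_symbol`). It reduces the growth of `kgSymbol⁻¹` to that of `(1 + ‖x‖²)⁻¹`. -/
def symbolVec {m : ℕ} (a r : ℝ) (ξ : STSpace m) : EuclideanSpace ℝ (Option (Option (Fin m))) :=
  (WithLp.toLp 2 fun j => (a ^ 2 + r)⁻¹ * match j with
    | none => (∑ k : Fin m, (2 * π * ξ (some k)) ^ 2) - (2 * π * ξ none) ^ 2
    | some none => √(2 * a ^ 2 - 2 * r) * (2 * π * ξ none)
    | some (some k) => √(2 * (a ^ 2 + r)) * (2 * π * ξ (some k)))

lemma temperate_symbolVec {m : ℕ} (a r : ℝ) :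
    (symbolVec a r : STSpace m → _).HasTemperateGrowth := by
  have h : (fun ξ : STSpace m => fun j => symbolVec a r ξ j).HasTemperateGrowth := by
    have : (fun ξ : STSpace m => fun j => symbolVec a r ξ j)
        = fun ξ => ∑ j, symbolVec a r ξ j • (Pi.single j (1 : ℝ)) := by
      funext ξ
      ext j
      simp [Finset.sum_apply, Pi.single_apply]
    rw [this]
    refine Function.HasTemperateGrowth.sum fun j _ => ?_
    have hj : (fun _ : STSpace m => (Pi.single j 1 : Option (Option (Fin m)) → ℝ)).HasTemperateGrowth :=
      .const _
    refine Function.HasTemperateGrowth.smul (𝕜 := ℝ) ?_ hj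
    rcases j with _ | _ | k
    · exact (Function.HasTemperateGrowth.const _).mul (temperate_sum_sq.sub
        (((Function.HasTemperateGrowth.const (2 * π)).mul (temperate_coord none)).pow 2))
    · exact (Function.HasTemperateGrowth.const _).mul ((Function.HasTemperateGrowth.const _).mul
        ((Function.HasTemperateGrowth.const (2 * π)).mul (temperate_coord none)))
    · exact (Function.HasTemperateGrowth.const _).mul ((Function.HasTemperateGrowth.const _).mul
        ((Function.HasTemperateGrowth.const (2 * π)).mul (temperate_coord (some k))))
  exact ((EuclideanSpace.equiv (Option (Option (Fin m))) ℝ).symm.hasTemperateGrowth).comp h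

lemma normSq_symbol {m : ℕ} {a r : ℝ} (h₁ : 0 < a ^ 2 + r) (h₂ : 0 ≤ a ^ 2 - r) (ξ : STSpace m) :
    Complex.normSq (kgSymbol a r ξ) = (a ^ 2 + r) ^ 2 * (1 + ‖symbolVec a r ξ‖ ^ 2) := by
  set S := ∑ k : Fin m, (2 * π * ξ (some k)) ^ 2 with hS
  set T := 2 * π * ξ none with hT
  have hD : kgSymbol a r ξ = ((a ^ 2 - T ^ 2 + S + r : ℝ) : ℂ) + ((2 * a * T : ℝ) : ℂ) * Complex.I := by
    rw [kgSymbol, ← hS, hT]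
    push_cast
    linear_combination (2 * π * (ξ none : ℂ)) ^ 2 * Complex.I_sq
  have hv : ‖symbolVec a r ξ‖ ^ 2 = ((a ^ 2 + r)⁻¹) ^ 2 *
      ((S - T ^ 2) ^ 2 + ((2 * a ^ 2 - 2 * r) * T ^ 2 + 2 * (a ^ 2 + r) * S)) := by
    have hk : ∀ k : Fin m, ((a ^ 2 + r)⁻¹ * (√(2 * (a ^ 2 + r)) * (2 * π * ξ (some k)))) ^ 2
        = ((a ^ 2 + r)⁻¹) ^ 2 * (2 * (a ^ 2 + r)) * (2 * π * ξ (some k)) ^ 2 := by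
      intro k
      rw [mul_pow, mul_pow, Real.sq_sqrt (by linarith)]
      ring
    rw [EuclideanSpace.norm_sq_eq, Fintype.sum_option, Fintype.sum_option]
    simp only [symbolVec, Real.norm_eq_abs, sq_abs, hk, ← Finset.mul_sum, ← hS, ← hT]
    rw [mul_pow _ (√_ * _), mul_pow (√_), Real.sq_sqrt (by linarith)]
    ring
  rw [hD, Complex.normSq_add_mul_I, hv]
  field_simp
  ring

lemma symbol_ne_zero {m : ℕ} {a r : ℝ} (h₁ : 0 < a ^ 2 + r) (h₂ : 0 ≤ a ^ 2 - r)
    (ξ : STSpace m) : kgSymbol a r ξ ≠ 0 := by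
  rw [← Complex.normSq_pos, normSq_symbol h₁ h₂]
  positivity

lemma temperate_symbol_inv {m : ℕ} {a r : ℝ} (h₁ : 0 < a ^ 2 + r) (h₂ : 0 ≤ a ^ 2 - r) :
    (fun ξ : STSpace m => (kgSymbol a r ξ)⁻¹).HasTemperateGrowth := by
  have : (fun ξ : STSpace m => (kgSymbol a r ξ)⁻¹) = fun ξ =>
      (Complex.conjCLE ∘ kgSymbol a r) ξ * ((Complex.ofReal ∘ fun ξ =>
        ((a ^ 2 + r) ^ 2)⁻¹ * ((fun x => (1 + ‖x‖ ^ 2) ^ (-1 : ℝ)) ∘ symbolVec a r) ξ)) ξ := by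
    funext ξ
    rw [Complex.inv_def, normSq_symbol h₁ h₂]
    simp [Real.rpow_neg_one, mul_comm]
  rw [this]
  refine (Complex.conjCLE.hasTemperateGrowth.comp (temperate_symbol a r)).mul
    (Function.Complex.hasTemperateGrowth_ofReal.comp ((Function.HasTemperateGrowth.const _).mul ?_))
  exact (Function.hasTemperateGrowth_one_add_norm_sq_rpow _ _).comp (temperate_symbolVec a r)

/-- Partial derivative of a Schwartz function. -/
def pd {m : ℕ} (i : Option (Fin m)) (h : 𝓢(STSpace m, ℂ)) : 𝓢(STSpace m, ℂ) := ∂_{stBasis i} h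

lemma fourier_deriv_apply {m : ℕ} (i : Option (Fin m)) (h : 𝓢(STSpace m, ℂ)) (ξ : STSpace m) :
    𝓕 (pd i h) ξ = 2 * π * Complex.I * (ξ i : ℂ) * 𝓕 h ξ := by
  rw [pd, SchwartzMap.fourier_lineDerivOp_eq]
  have : (fun x : STSpace m => inner ℝ x (stBasis i)).HasTemperateGrowth := by fun_prop
  rw [smul_apply, SchwartzMap.smulLeftCLM_apply_apply this]
  simp [stBasis, EuclideanSpace.inner_single_right]
  ring

/-- Dividing the Fourier transform by the nowhere-vanishing symbol solves the conjugated equation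
in the Schwartz space. -/
theorem exists_schwartz_solution {m : ℕ} {a r : ℝ} (h₁ : 0 < a ^ 2 + r) (h₂ : 0 ≤ a ^ 2 - r)
    (f : 𝓢(STSpace m, ℂ)) : ∃ h : 𝓢(STSpace m, ℂ),
      pd none (pd none h) + (2 * a : ℂ) • pd none h + ((a : ℂ) ^ 2) • h
        - ∑ k : Fin m, pd (some k) (pd (some k) h) + (r : ℂ) • h = f := by
  refine ⟨𝓕⁻ (SchwartzMap.smulLeftCLM ℂ (fun ξ => (kgSymbol a r ξ)⁻¹) (𝓕 f)), ?_⟩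
  set h := 𝓕⁻ (SchwartzMap.smulLeftCLM ℂ (fun ξ => (kgSymbol a r ξ)⁻¹) (𝓕 f)) with hh
  have hF : ∀ ξ, kgSymbol a r ξ * 𝓕 h ξ = 𝓕 f ξ := by
    intro ξ
    rw [hh, FourierTransform.fourier_fourierInv_eq,
      SchwartzMap.smulLeftCLM_apply_apply (temperate_symbol_inv h₁ h₂), smul_eq_mul,
      mul_inv_cancel_left₀ (symbol_ne_zero h₁ h₂ ξ)]
  apply (FourierTransform.fourierCLE ℂ 𝓢(STSpace m, ℂ)).injective
  simp only [map_add, map_sub, map_sum, map_smul, FourierTransform.fourierCLE_apply]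
  ext ξ
  simp only [add_apply, sub_apply, smul_apply,
    sum_apply, fourier_deriv_apply, smul_eq_mul]
  rw [← hF ξ, kgSymbol]
  push_cast
  have : ∀ k : Fin m, 2 * (π : ℂ) * Complex.I * (ξ (some k) : ℂ) *
      (2 * π * Complex.I * (ξ (some k) : ℂ) * 𝓕 h ξ)
      = - ((2 * π * (ξ (some k) : ℂ)) ^ 2 * 𝓕 h ξ) := by
    intro k
    linear_combination (2 * π * (ξ (some k) : ℂ)) ^ 2 * 𝓕 h ξ * Complex.I_sq
  simp only [this, Finset.sum_neg_distrib, ← Finset.sum_mul]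
  ring

/-! ### The conjugated operator on spacetime -/

/-- The conjugated Klein–Gordon operator `e^{-at} (∂₀² - Δ + r) e^{at} = (∂₀ + a)² - Δ + r`. -/
def KGtw {m : ℕ} (a r : ℝ) (H : ℝ × (Fin m → ℝ) → ℝ) : ℝ × (Fin m → ℝ) → ℝ :=
  fun z => d0 (d0 H) z + 2 * a * d0 H z + a ^ 2 * H z - (∑ k, dk k (dk k H) z) + r * H z

/-- The identification of `ℝ × ℝᵐ` with `STSpace m`, time being the coordinate `none`. -/
def stEquiv (m : ℕ) : (ℝ × (Fin m → ℝ)) ≃L[ℝ] STSpace m :=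
  LinearEquiv.toContinuousLinearEquiv
    { toFun := fun z => WithLp.toLp 2 fun i => i.elim z.1 z.2
      invFun := fun ξ => (ξ none, fun k => ξ (some k))
      map_add' := by
        intro x y
        ext i
        cases i <;> simp
      map_smul' := by
        intro c x
        ext i
        cases i <;> simp
      left_inv := by
        intro x
        simp
      right_inv := by
        intro x
        ext i
        cases i <;> simp }

lemma stEquiv_time {m : ℕ} : stEquiv m (1, 0) = stBasis none := by
  ext i
  cases i <;> simp [stEquiv, stBasis]

lemma stEquiv_space {m : ℕ} (k : Fin m) : stEquiv m (0, Pi.single k 1) = stBasis (some k) := by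
  ext i
  cases i <;> simp [stEquiv, stBasis, Pi.single_apply]

/-- The real part of a complex Schwartz function, transported to `ℝ × ℝᵐ`. -/
def pullRe {m : ℕ} (h : 𝓢(STSpace m, ℂ)) : 𝓢(ℝ × (Fin m → ℝ), ℝ) :=
  SchwartzMap.postcompCLM (𝕜 := ℝ) Complex.reCLM
    (SchwartzMap.compCLMOfContinuousLinearEquiv ℝ (stEquiv m) h)

lemma pullRe_apply {m : ℕ} (h : 𝓢(STSpace m, ℂ)) (z : ℝ × (Fin m → ℝ)) :
    pullRe h z = (h (stEquiv m z)).re := rfl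

lemma fderiv_pullRe {m : ℕ} (h : 𝓢(STSpace m, ℂ)) (z v : ℝ × (Fin m → ℝ)) :
    fderiv ℝ (pullRe h) z v = (fderiv ℝ h (stEquiv m z) (stEquiv m v)).re := by
  have h1 : HasFDerivAt (pullRe h) (Complex.reCLM ∘L (fderiv ℝ h (stEquiv m z)) ∘L
      (stEquiv m : (ℝ × (Fin m → ℝ)) →L[ℝ] STSpace m)) z := by
    exact Complex.reCLM.hasFDerivAt.comp z
      ((h.hasFDerivAt (stEquiv m z)).comp z (stEquiv m).hasFDerivAt)
  rw [h1.fderiv]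
  rfl

lemma d0_pullRe {m : ℕ} (h : 𝓢(STSpace m, ℂ)) : d0 (pullRe h) = pullRe (pd none h) := by
  funext z
  rw [d0, fderiv_pullRe, stEquiv_time]
  rfl

lemma dk_pullRe {m : ℕ} (k : Fin m) (h : 𝓢(STSpace m, ℂ)) :
    dk k (pullRe h) = pullRe (pd (some k) h) := by
  funext z
  rw [dk, fderiv_pullRe, stEquiv_space]
  rfl

theorem exists_twisted_solution {m : ℕ} {a r : ℝ} (h₁ : 0 < a ^ 2 + r) (h₂ : 0 ≤ a ^ 2 - r)
    (f : ℝ × (Fin m → ℝ) → ℝ) (hf : ContDiff ℝ ∞ f) (hc : HasCompactSupport f) :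
    ∃ H : 𝓢(ℝ × (Fin m → ℝ), ℝ), ∀ z, KGtw a r H z = f z := by
  have hfc : ContDiff ℝ ∞ (fun z => (f z : ℂ)) := Complex.ofRealCLM.contDiff.comp hf
  have hcc : HasCompactSupport (fun z => (f z : ℂ)) := hc.comp_left (g := Complex.ofReal) rfl
  obtain ⟨h, hh⟩ := exists_schwartz_solution h₁ h₂
    (SchwartzMap.compCLMOfContinuousLinearEquiv ℝ (stEquiv m).symm (hcc.toSchwartzMap hfc))
  refine ⟨pullRe h, fun z => ?_⟩
  have := congrArg Complex.re (DFunLike.congr_fun hh (stEquiv m z))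
  simp only [add_apply, sub_apply, smul_apply, sum_apply, smul_eq_mul,
    SchwartzMap.compCLMOfContinuousLinearEquiv_apply, Function.comp_apply,
    ContinuousLinearEquiv.symm_apply_apply, HasCompactSupport.toSchwartzMap_toFun] at this
  simp only [KGtw, d0_pullRe, dk_pullRe, pullRe_apply]
  rw [← Complex.ofReal_re (f z)]
  refine Eq.trans ?_ this
  simp [← Complex.ofReal_pow]

/-! ### The energy inequality -/

lemma contDiff_fderiv_apply {m : ℕ} {U : ℝ × (Fin m → ℝ) → ℝ} (hU : ContDiff ℝ ∞ U)
    (v : ℝ × (Fin m → ℝ)) : ContDiff ℝ ∞ fun z => fderiv ℝ U z v :=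
  (hU.fderiv_right (m := ∞) (by simp)).clm_apply contDiff_const

lemma contDiff_d0 {m : ℕ} {U : ℝ × (Fin m → ℝ) → ℝ} (hU : ContDiff ℝ ∞ U) :
    ContDiff ℝ ∞ (d0 U) := contDiff_fderiv_apply hU _

lemma contDiff_dk {m : ℕ} {U : ℝ × (Fin m → ℝ) → ℝ} (hU : ContDiff ℝ ∞ U) (k : Fin m) :
    ContDiff ℝ ∞ (dk k U) := contDiff_fderiv_apply hU _

lemma dk_d0_comm {m : ℕ} {U : ℝ × (Fin m → ℝ) → ℝ} (hU : ContDiff ℝ ∞ U) (k : Fin m)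
    (z : ℝ × (Fin m → ℝ)) : dk k (d0 U) z = d0 (dk k U) z := by
  have hd : DifferentiableAt ℝ (fderiv ℝ U) z :=
    ((hU.fderiv_right (m := ∞) (by simp)).differentiable (by simp)) z
  have hs : IsSymmSndFDerivAt ℝ U z := hU.contDiffAt.isSymmSndFDerivAt (by
    simp only [minSmoothness_of_isRCLikeNormedField]
    exact WithTop.coe_le_coe.2 (le_top : (2 : ℕ∞) ≤ ⊤))
  have key : ∀ u v : ℝ × (Fin m → ℝ),
      fderiv ℝ (fun y => fderiv ℝ U y u) z v = fderiv ℝ (fderiv ℝ U) z v u := by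
    intro u v
    rw [fderiv_clm_apply hd (differentiableAt_const u)]
    simp
  unfold dk d0
  rw [key, key]
  exact hs.eq _ _

instance volume_isAddHaar (m : ℕ) : (volume : Measure (ℝ × (Fin m → ℝ))).IsAddHaarMeasure :=
  inferInstanceAs ((volume : Measure ℝ).prod (volume : Measure (Fin m → ℝ))).IsAddHaarMeasure

lemma integral_fderiv_eq_zero {m : ℕ} {J : ℝ × (Fin m → ℝ) → ℝ} {v : ℝ × (Fin m → ℝ)}
    (hJ : Differentiable ℝ J) (hi : Integrable J) (hi' : Integrable fun z => fderiv ℝ J z v) :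
    ∫ z, fderiv ℝ J z v = 0 := by
  have := integral_mul_fderiv_eq_neg_fderiv_mul_of_integrable (μ := volume)
    (f := fun _ : ℝ × (Fin m → ℝ) => (1 : ℝ)) (g := J) (v := v) (by simp) (by simpa using hi')
    (by simpa using hi) (fun _ _ => differentiableAt_const _) (fun _ _ => hJ _)
  simpa using this

/-- The conjugated time derivative `e^{-at} ∂₀ (e^{at} H) = ∂₀H + aH`. -/
def twP {m : ℕ} (a : ℝ) (H : ℝ × (Fin m → ℝ) → ℝ) : ℝ × (Fin m → ℝ) → ℝ :=
  fun z => d0 H z + a * H z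

/-- Twice the energy density `(∂₀H + aH)² + |∇H|² + M H²` of the conjugated equation; the
artificial mass `M` makes it coercive for every sign of `r`. -/
def twE {m : ℕ} (a M : ℝ) (H : ℝ × (Fin m → ℝ) → ℝ) : ℝ × (Fin m → ℝ) → ℝ :=
  fun z => twP a H z ^ 2 + ∑ k, dk k H z ^ 2 + M * H z ^ 2

/-- Time component of the energy current, weighted by `w`. -/
def flux0 {m : ℕ} (a M : ℝ) (w H : ℝ × (Fin m → ℝ) → ℝ) : ℝ × (Fin m → ℝ) → ℝ :=
  fun z => w z * (2⁻¹ * twE a M H z)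

/-- `k`-th spatial component of the energy current, weighted by `w`. -/
def fluxk {m : ℕ} (a : ℝ) (w H : ℝ × (Fin m → ℝ) → ℝ) (k : Fin m) : ℝ × (Fin m → ℝ) → ℝ :=
  fun z => w z * (-(twP a H z * dk k H z))

lemma contDiff_twP {m : ℕ} {a : ℝ} {H : ℝ × (Fin m → ℝ) → ℝ} (hH : ContDiff ℝ ∞ H) :
    ContDiff ℝ ∞ (twP a H) := (contDiff_d0 hH).add (contDiff_const.mul hH)

lemma contDiff_twE {m : ℕ} {a M : ℝ} {H : ℝ × (Fin m → ℝ) → ℝ} (hH : ContDiff ℝ ∞ H) :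
    ContDiff ℝ ∞ (twE a M H) :=
  (((contDiff_twP hH).pow 2).add (ContDiff.sum fun k _ => (contDiff_dk hH k).pow 2)).add
    (contDiff_const.mul (hH.pow 2))

lemma contDiff_flux0 {m : ℕ} {a M : ℝ} {w H : ℝ × (Fin m → ℝ) → ℝ} (hw : ContDiff ℝ ∞ w)
    (hH : ContDiff ℝ ∞ H) : ContDiff ℝ ∞ (flux0 a M w H) :=
  hw.mul (contDiff_const.mul (contDiff_twE hH))

lemma contDiff_fluxk {m : ℕ} {a : ℝ} {w H : ℝ × (Fin m → ℝ) → ℝ} (hw : ContDiff ℝ ∞ w)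
    (hH : ContDiff ℝ ∞ H) (k : Fin m) : ContDiff ℝ ∞ (fluxk a w H k) :=
  hw.mul ((contDiff_twP hH).mul (contDiff_dk hH k)).neg

lemma fderiv_twP {m : ℕ} {a : ℝ} {H : ℝ × (Fin m → ℝ) → ℝ} (hH : ContDiff ℝ ∞ H)
    (z v : ℝ × (Fin m → ℝ)) :
    fderiv ℝ (twP a H) z v = fderiv ℝ (d0 H) z v + a * fderiv ℝ H z v := by
  have h1 := ((contDiff_d0 hH).differentiable (by simp) z).hasFDerivAt
  have h2 := (hH.differentiable (by simp) z).hasFDerivAt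
  have h3 : HasFDerivAt (twP a H) _ z := h1.add (h2.const_mul a)
  rw [h3.fderiv]
  simp

lemma d0_flux0 {m : ℕ} {a M : ℝ} {w H : ℝ × (Fin m → ℝ) → ℝ} (hw : ContDiff ℝ ∞ w)
    (hH : ContDiff ℝ ∞ H) (z : ℝ × (Fin m → ℝ)) :
    d0 (flux0 a M w H) z = d0 w z * (2⁻¹ * twE a M H z) + w z * (twP a H z * d0 (twP a H) z
      + ∑ k, dk k H z * d0 (dk k H) z + M * (H z * d0 H z)) := by
  have hP := ((contDiff_twP (a := a) hH).differentiable (by simp) z).hasFDerivAt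
  have hQ : ∀ k, HasFDerivAt (dk k H) _ z := fun k =>
    ((contDiff_dk hH k).differentiable (by simp) z).hasFDerivAt
  have hH' := (hH.differentiable (by simp) z).hasFDerivAt
  have hw' := (hw.differentiable (by simp) z).hasFDerivAt
  have hE : HasFDerivAt (twE a M H) _ z :=
    ((hP.pow 2).add (HasFDerivAt.fun_sum (u := Finset.univ) fun k _ => (hQ k).pow 2)).add
      ((hH'.pow 2).const_mul M)
  have hJ : HasFDerivAt (flux0 a M w H) _ z := hw'.mul (hE.const_mul 2⁻¹)
  rw [d0, hJ.fderiv]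
  simp only [add_apply, smul_apply, sum_apply, smul_eq_mul, nsmul_eq_mul]
  change _ = fderiv ℝ w z (1, 0) * _ + w z * (twP a H z * fderiv ℝ (twP a H) z (1, 0)
    + ∑ k, dk k H z * fderiv ℝ (dk k H) z (1, 0) + M * (H z * fderiv ℝ H z (1, 0)))
  have hs : ∑ k, (((2 : ℕ) : ℝ) * dk k H z ^ (2 - 1)) * fderiv ℝ (dk k H) z (1, 0)
      = 2 * ∑ k, dk k H z * fderiv ℝ (dk k H) z (1, 0) := by
    rw [Finset.mul_sum]
    refine Finset.sum_congr rfl fun k _ => ?_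
    norm_num
    ring
  push_cast at hs ⊢
  rw [hs]
  norm_num
  ring

lemma dk_fluxk {m : ℕ} {a : ℝ} {w H : ℝ × (Fin m → ℝ) → ℝ} (hw : ContDiff ℝ ∞ w)
    (hH : ContDiff ℝ ∞ H) (k : Fin m) (z : ℝ × (Fin m → ℝ)) :
    dk k (fluxk a w H k) z = -(twP a H z * (dk k w z * dk k H z))
      - w z * (dk k H z * d0 (dk k H) z) - w z * a * dk k H z ^ 2
      - w z * twP a H z * dk k (dk k H) z := by
  have hP := ((contDiff_twP (a := a) hH).differentiable (by simp) z).hasFDerivAt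
  have hQ := ((contDiff_dk hH k).differentiable (by simp) z).hasFDerivAt
  have hw' := (hw.differentiable (by simp) z).hasFDerivAt
  have hJ : HasFDerivAt (fluxk a w H k) _ z := hw'.mul (hP.mul hQ).neg
  rw [← dk_d0_comm hH, dk, hJ.fderiv]
  simp only [add_apply, smul_apply, neg_apply, smul_eq_mul, fderiv_twP hH]
  simp only [← show dk k H z = fderiv ℝ H z (0, Pi.single k 1) from rfl,
    ← show dk k w z = fderiv ℝ w z (0, Pi.single k 1) from rfl,
    ← show dk k (d0 H) z = fderiv ℝ (d0 H) z (0, Pi.single k 1) from rfl,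
    ← show dk k (dk k H) z = fderiv ℝ (dk k H) z (0, Pi.single k 1) from rfl]
  ring

/-- If the covector `(b, g)` is causal with `b ≤ 0`, its pairing with the energy current is
nonpositive (Cauchy–Schwarz and AM–GM). -/
lemma flux_bound {m : ℕ} (b p : ℝ) (g q : Fin m → ℝ) (hb : b ≤ 0) (hg : ∑ k, g k ^ 2 ≤ b ^ 2) :
    2⁻¹ * b * (p ^ 2 + ∑ k, q k ^ 2) - p * ∑ k, g k * q k ≤ 0 := by
  have cs := Finset.sum_mul_sq_le_sq_mul_sq Finset.univ g q
  set S := ∑ k, g k * q k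
  set Q := ∑ k, q k ^ 2
  have hQ : 0 ≤ Q := Finset.sum_nonneg fun k _ => sq_nonneg _
  have h1 : S ^ 2 ≤ b ^ 2 * Q := cs.trans (mul_le_mul_of_nonneg_right hg hQ)
  have h2 : (p * S) ^ 2 ≤ (2⁻¹ * -b * (p ^ 2 + Q)) ^ 2 := by
    have := mul_le_mul_of_nonneg_left h1 (sq_nonneg p)
    nlinarith [mul_nonneg (sq_nonneg b) (sq_nonneg (p ^ 2 - Q))]
  have h3 : 0 ≤ 2⁻¹ * -b * (p ^ 2 + Q) :=
    mul_nonneg (by linarith) (by positivity)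
  have := (abs_le_of_sq_le_sq' h2 h3).1
  linarith

/-- For a weight with past-directed causal gradient, the divergence of the weighted energy current
of a solution is at most minus the weighted energy density: the damping from the conjugation with
`a = |r| + 2` dominates the zeroth-order terms. -/
lemma divergence_le {m : ℕ} {r : ℝ} {w H : ℝ × (Fin m → ℝ) → ℝ} (hw : ContDiff ℝ ∞ w)
    (hH : ContDiff ℝ ∞ H) (z : ℝ × (Fin m → ℝ)) (hw0 : 0 ≤ w z) (hwt : d0 w z ≤ 0)
    (hwx : ∑ k, dk k w z ^ 2 ≤ d0 w z ^ 2) (heq : w z * KGtw (|r| + 2) r H z = 0) :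
    d0 (flux0 (|r| + 2) (|r| + 1) w H) z + ∑ k, dk k (fluxk (|r| + 2) w H k) z
      ≤ -(w z * twE (|r| + 2) (|r| + 1) H z) := by
  rw [d0_flux0 hw hH]
  simp only [dk_fluxk hw hH, Finset.sum_sub_distrib, Finset.sum_neg_distrib, ← Finset.mul_sum]
  have hf := flux_bound (d0 w z) (twP (|r| + 2) H z) (fun k => dk k w z) (fun k => dk k H z) hwt hwx
  have hdP : d0 (twP (|r| + 2) H) z = d0 (d0 H) z + (|r| + 2) * d0 H z := fderiv_twP hH _ _
  rw [hdP]
  have hPdef : twP (|r| + 2) H z = d0 H z + (|r| + 2) * H z := rfl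
  unfold KGtw at heq
  unfold twE
  set P := twP (|r| + 2) H z
  set Q := ∑ k, dk k H z ^ 2
  have hd : d0 H z = P - (|r| + 2) * H z := by linarith
  rw [hd] at heq ⊢
  have hQ : 0 ≤ Q := Finset.sum_nonneg fun k _ => sq_nonneg _
  have hr1 := le_abs_self r
  have hr2 := neg_abs_le r
  have hr0 := abs_nonneg r
  have hwH : d0 w z * (|r| + 1) * H z ^ 2 ≤ 0 :=
    mul_nonpos_of_nonpos_of_nonneg (mul_nonpos_of_nonpos_of_nonneg hwt (by linarith)) (sq_nonneg _)
  -- `|r| + 1 = a - 1` is the part of the damping left over to absorb this indefinite term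
  have hcross : (|r| + 1 - r) * (H z * P) ≤ (|r| + 1) * (P ^ 2 + (|r| + 1) * H z ^ 2) := by
    have e1 : (|r| + 1 - r) * (H z * P) ≤ (|r| + 1) * (P ^ 2 + H z ^ 2) := by
      nlinarith [mul_nonneg (by linarith : 0 ≤ |r| + 1 - r) (sq_nonneg (H z - P)),
        mul_nonneg (by linarith : 0 ≤ |r| + 1 + r) (add_nonneg (sq_nonneg (H z)) (sq_nonneg P))]
    nlinarith [mul_nonneg (mul_nonneg hr0 (by linarith : 0 ≤ |r| + 1)) (sq_nonneg (H z))]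
  have hmain : 0 ≤ w z * ((|r| + 1) * (P ^ 2 + (|r| + 1) * H z ^ 2)
      - (|r| + 1 - r) * (H z * P) + (|r| + 1) * Q) :=
    mul_nonneg hw0 (by nlinarith [mul_nonneg (by linarith : 0 ≤ |r| + 1) hQ])
  linear_combination hf + hmain + 2⁻¹ * hwH + P * heq

/-- Integrating `divergence_le` over spacetime: the divergence has integral zero, so the weighted
energy vanishes identically, and `H` vanishes wherever the weight is positive. -/
theorem energy_vanishing {m : ℕ} {r : ℝ} {w H : ℝ × (Fin m → ℝ) → ℝ} (hw : ContDiff ℝ ∞ w)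
    (hH : ContDiff ℝ ∞ H) (hw0 : ∀ z, 0 ≤ w z) (hwt : ∀ z, d0 w z ≤ 0)
    (hwx : ∀ z, ∑ k, dk k w z ^ 2 ≤ d0 w z ^ 2) (heq : ∀ z, w z * KGtw (|r| + 2) r H z = 0)
    (hi0 : Integrable (flux0 (|r| + 2) (|r| + 1) w H))
    (hi0' : Integrable (d0 (flux0 (|r| + 2) (|r| + 1) w H)))
    (hik : ∀ k, Integrable (fluxk (|r| + 2) w H k))
    (hik' : ∀ k, Integrable (dk k (fluxk (|r| + 2) w H k))) (z : ℝ × (Fin m → ℝ)) (hz : 0 < w z) :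
    H z = 0 := by
  set e := fun z => w z * twE (|r| + 2) (|r| + 1) H z with he
  have he_int : Integrable e := by
    refine (hi0.const_mul 2).congr (Filter.Eventually.of_forall fun y => ?_)
    simp only [flux0, he]
    ring
  have hr0 := abs_nonneg r
  have hE0 : ∀ y, 0 ≤ twE (|r| + 2) (|r| + 1) H y := fun y =>
    add_nonneg (add_nonneg (sq_nonneg _) (Finset.sum_nonneg fun k _ => sq_nonneg _))
      (mul_nonneg (by linarith) (sq_nonneg _))
  have he0 : 0 ≤ e := fun y => mul_nonneg (hw0 y) (hE0 y)
  have hdiv0 : ∫ y, (d0 (flux0 (|r| + 2) (|r| + 1) w H) y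
      + ∑ k, dk k (fluxk (|r| + 2) w H k) y) = 0 := by
    rw [integral_add hi0' (integrable_finsetSum _ fun k _ => hik' k),
      integral_finsetSum _ fun k _ => hik' k]
    have h0 : ∫ y, d0 (flux0 (|r| + 2) (|r| + 1) w H) y = 0 :=
      integral_fderiv_eq_zero ((contDiff_flux0 hw hH).differentiable (by simp)) hi0 hi0'
    have hk : ∀ k, ∫ y, dk k (fluxk (|r| + 2) w H k) y = 0 := fun k =>
      integral_fderiv_eq_zero ((contDiff_fluxk hw hH k).differentiable (by simp)) (hik k) (hik' k)
    simp [h0, hk]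
  have hle : ∫ y, (d0 (flux0 (|r| + 2) (|r| + 1) w H) y
      + ∑ k, dk k (fluxk (|r| + 2) w H k) y) ≤ ∫ y, -e y :=
    integral_mono (hi0'.add (integrable_finsetSum _ fun k _ => hik' k)) he_int.neg fun y =>
      divergence_le hw hH y (hw0 y) (hwt y) (hwx y) (heq y)
  rw [hdiv0, integral_neg] at hle
  have hI0 : ∫ y, e y = 0 := le_antisymm (by linarith) (integral_nonneg he0)
  have hcont : Continuous e := hw.continuous.mul (contDiff_twE hH).continuous
  have hzero : e = 0 := by
    rw [integral_eq_zero_iff_of_nonneg he0 he_int] at hI0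
    exact (hcont.ae_eq_iff_eq volume continuous_zero).1 hI0
  have h1 : w z * twE (|r| + 2) (|r| + 1) H z = 0 := congrFun hzero z
  have h2 : twE (|r| + 2) (|r| + 1) H z = 0 := (mul_eq_zero.1 h1).resolve_left hz.ne'
  have h3 : (|r| + 1) * H z ^ 2 ≤ 0 := by
    have : 0 ≤ twP (|r| + 2) H z ^ 2 + ∑ k, dk k H z ^ 2 :=
      add_nonneg (sq_nonneg _) (Finset.sum_nonneg fun k _ => sq_nonneg _)
    unfold twE at h2
    linarith
  have h4 : H z ^ 2 ≤ 0 := by nlinarith [mul_nonneg hr0 (sq_nonneg (H z))]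
  exact pow_eq_zero_iff (two_ne_zero) |>.1 (le_antisymm h4 (sq_nonneg _))

/-! ### Smoothed backward light cones -/

/-- `0 < coneArg ε c z` says that `z` lies below a past hyperboloid inside the backward light cone
of `c`; the shift `ε` makes the boundary smooth at the tip. -/
def coneArg {m : ℕ} (ε : ℝ) (c : ℝ × (Fin m → ℝ)) (z : ℝ × (Fin m → ℝ)) : ℝ :=
  c.1 - z.1 - √(ε ^ 2 + ∑ k, (z.2 k - c.2 k) ^ 2)

/-- A smooth weight, positive exactly inside the region `0 < coneArg ε c`. -/
def coneWeight {m : ℕ} (ε : ℝ) (c : ℝ × (Fin m → ℝ)) (z : ℝ × (Fin m → ℝ)) : ℝ :=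
  Real.smoothTransition (coneArg ε c z)

lemma contDiff_coneArg {m : ℕ} {ε : ℝ} (hε : 0 < ε) (c : ℝ × (Fin m → ℝ)) :
    ContDiff ℝ ∞ (coneArg ε c) := by
  unfold coneArg
  refine (contDiff_const.sub contDiff_fst).sub (ContDiff.sqrt ?_ fun z => ?_)
  · refine contDiff_const.add (ContDiff.sum fun k _ => ContDiff.pow (ContDiff.sub ?_ contDiff_const) 2)
    exact (contDiff_apply ℝ ℝ k).comp contDiff_snd
  · have : 0 ≤ ∑ k, (z.2 k - c.2 k) ^ 2 := Finset.sum_nonneg fun k _ => sq_nonneg _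
    positivity

lemma fderiv_coneArg {m : ℕ} {ε : ℝ} (hε : 0 < ε) (c z v : ℝ × (Fin m → ℝ)) :
    fderiv ℝ (coneArg ε c) z v = -v.1 - (∑ k, (z.2 k - c.2 k) * v.2 k) /
      √(ε ^ 2 + ∑ k, (z.2 k - c.2 k) ^ 2) := by
  have hpos : 0 < ε ^ 2 + ∑ k, (z.2 k - c.2 k) ^ 2 := by
    have : 0 ≤ ∑ k, (z.2 k - c.2 k) ^ 2 := Finset.sum_nonneg fun k _ => sq_nonneg _
    positivity
  have hk : ∀ k : Fin m, HasFDerivAt (fun y : ℝ × (Fin m → ℝ) => y.2 k - c.2 k)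
      ((ContinuousLinearMap.proj k : (Fin m → ℝ) →L[ℝ] ℝ) ∘L ContinuousLinearMap.snd ℝ ℝ (Fin m → ℝ))
      z := fun k => ((ContinuousLinearMap.proj k : (Fin m → ℝ) →L[ℝ] ℝ) ∘L
        ContinuousLinearMap.snd ℝ ℝ (Fin m → ℝ)).hasFDerivAt.sub_const (c.2 k)
  have hs : HasFDerivAt (coneArg ε c) _ z :=
    (hasFDerivAt_fst.const_sub c.1).sub
      (((HasFDerivAt.fun_sum (u := Finset.univ) fun k _ => (hk k).pow 2).const_add (ε ^ 2)).sqrt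
        hpos.ne')
  rw [hs.fderiv]
  simp only [sub_apply, neg_apply, smul_apply, sum_apply, smul_eq_mul, nsmul_eq_mul,
    ContinuousLinearMap.comp_apply, ContinuousLinearMap.coe_fst', ContinuousLinearMap.coe_snd',
    ContinuousLinearMap.proj_apply]
  have : ∑ k, (((2 : ℕ) : ℝ) * (z.2 k - c.2 k) ^ (2 - 1)) * v.2 k
      = 2 * ∑ k, (z.2 k - c.2 k) * v.2 k := by
    rw [Finset.mul_sum]
    refine Finset.sum_congr rfl fun k _ => ?_
    norm_num
    ring
  push_cast at this ⊢
  rw [this]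
  have := Real.sqrt_pos.2 hpos
  field_simp

lemma contDiff_coneWeight {m : ℕ} {ε : ℝ} (hε : 0 < ε) (c : ℝ × (Fin m → ℝ)) :
    ContDiff ℝ ∞ (coneWeight ε c) :=
  Real.smoothTransition.contDiff.comp (contDiff_coneArg hε c)

lemma fderiv_coneWeight {m : ℕ} {ε : ℝ} (hε : 0 < ε) (c z v : ℝ × (Fin m → ℝ)) :
    fderiv ℝ (coneWeight ε c) z v =
      deriv Real.smoothTransition (coneArg ε c z) * fderiv ℝ (coneArg ε c) z v := by
  have h1 : HasDerivAt Real.smoothTransition _ (coneArg ε c z) :=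
    ((Real.smoothTransition.contDiff (n := 1)).differentiable (by simp) _).hasDerivAt
  have h2 := ((contDiff_coneArg hε c).differentiable (by simp) z).hasFDerivAt
  have h3 : HasFDerivAt (coneWeight ε c) _ z := h1.comp_hasFDerivAt z h2
  rw [h3.fderiv]
  simp

lemma d0_coneWeight {m : ℕ} {ε : ℝ} (hε : 0 < ε) (c z : ℝ × (Fin m → ℝ)) :
    d0 (coneWeight ε c) z = -deriv Real.smoothTransition (coneArg ε c z) := by
  rw [d0, fderiv_coneWeight hε, fderiv_coneArg hε]
  simp

lemma dk_coneWeight {m : ℕ} {ε : ℝ} (hε : 0 < ε) (c z : ℝ × (Fin m → ℝ)) (k : Fin m) :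
    dk k (coneWeight ε c) z = -deriv Real.smoothTransition (coneArg ε c z) *
      ((z.2 k - c.2 k) / √(ε ^ 2 + ∑ k, (z.2 k - c.2 k) ^ 2)) := by
  rw [dk, fderiv_coneWeight hε, fderiv_coneArg hε]
  simp [Pi.single_apply]

lemma d0_coneWeight_nonpos {m : ℕ} {ε : ℝ} (hε : 0 < ε) (c z : ℝ × (Fin m → ℝ)) :
    d0 (coneWeight ε c) z ≤ 0 := by
  rw [d0_coneWeight hε]
  exact neg_nonpos.2 Real.smoothTransition.monotone.deriv_nonneg

lemma sum_dk_coneWeight_sq_le {m : ℕ} {ε : ℝ} (hε : 0 < ε) (c z : ℝ × (Fin m → ℝ)) :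
    ∑ k, dk k (coneWeight ε c) z ^ 2 ≤ d0 (coneWeight ε c) z ^ 2 := by
  have h0 : 0 ≤ ∑ k, (z.2 k - c.2 k) ^ 2 := Finset.sum_nonneg fun k _ => sq_nonneg _
  simp only [dk_coneWeight hε, d0_coneWeight hε, mul_pow, div_pow, ← Finset.mul_sum,
    ← Finset.sum_div]
  refine mul_le_of_le_one_right (sq_nonneg _) ?_
  rw [Real.sq_sqrt (by positivity)]
  exact div_le_one_of_le₀ (by nlinarith) (by positivity)

lemma exists_bound_deriv_smoothTransition :
    ∃ C, ∀ x, |deriv Real.smoothTransition x| ≤ C := by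
  have hc : Continuous (deriv Real.smoothTransition) :=
    (Real.smoothTransition.contDiff (n := 1)).continuous_deriv (by simp)
  refine hc.bounded_above_of_compact_support ?_
  refine HasCompactSupport.intro (isCompact_Icc (a := (0 : ℝ)) (b := 1)) fun x hx => ?_
  rw [mem_Icc, not_and_or, not_le, not_le] at hx
  rcases hx with hx | hx
  · have : Real.smoothTransition =ᶠ[nhds x] fun _ => 0 := by
      filter_upwards [Iio_mem_nhds hx] with y hy
      exact Real.smoothTransition.zero_of_nonpos (le_of_lt hy)
    rw [this.deriv_eq]
    simp
  · have : Real.smoothTransition =ᶠ[nhds x] fun _ => 1 := by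
      filter_upwards [Ioi_mem_nhds hx] with y hy
      exact Real.smoothTransition.one_of_one_le (le_of_lt hy)
    rw [this.deriv_eq]
    simp

lemma exists_bound_coneWeight {m : ℕ} {ε : ℝ} (hε : 0 < ε) (c : ℝ × (Fin m → ℝ)) :
    ∃ C, (∀ z, |d0 (coneWeight ε c) z| ≤ C) ∧ ∀ k z, |dk k (coneWeight ε c) z| ≤ C := by
  obtain ⟨C, hC⟩ := exists_bound_deriv_smoothTransition
  have h0 : ∀ z, |d0 (coneWeight ε c) z| ≤ C := fun z => by
    rw [d0_coneWeight hε, abs_neg]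
    exact hC _
  refine ⟨C, h0, fun k z => le_trans (sq_le_sq.1 ?_) (h0 z)⟩
  exact (Finset.single_le_sum (f := fun k => dk k (coneWeight ε c) z ^ 2)
    (fun k _ => sq_nonneg _) (Finset.mem_univ k)).trans (sum_dk_coneWeight_sq_le hε c z)

lemma integrable_weight_mul {m : ℕ} {w : ℝ × (Fin m → ℝ) → ℝ} (hw : ContDiff ℝ ∞ w) {B : ℝ}
    (hB : ∀ z, |w z| ≤ B) (q : 𝓢(ℝ × (Fin m → ℝ), ℝ)) : Integrable fun z => w z * q z :=
  q.integrable.bdd_mul hw.continuous.aestronglyMeasurable (Filter.Eventually.of_forall hB)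

lemma integrable_fderiv_weight_mul {m : ℕ} {w : ℝ × (Fin m → ℝ) → ℝ} (hw : ContDiff ℝ ∞ w)
    {B C : ℝ} (hB : ∀ z, |w z| ≤ B) {v : ℝ × (Fin m → ℝ)} (hC : ∀ z, |fderiv ℝ w z v| ≤ C)
    (q : 𝓢(ℝ × (Fin m → ℝ), ℝ)) : Integrable fun z => fderiv ℝ (fun z => w z * q z) z v := by
  have h : (fun z => fderiv ℝ (fun z => w z * q z) z v)
      = fun z => w z * (∂_{v} q : 𝓢(ℝ × (Fin m → ℝ), ℝ)) z + fderiv ℝ w z v * q z := by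
    funext z
    have h1 := ((hw.differentiable (by simp) z).hasFDerivAt).mul (q.hasFDerivAt z)
    have h2 : HasFDerivAt (fun z => w z * q z) _ z := h1
    rw [h2.fderiv, SchwartzMap.lineDerivOp_apply_eq_fderiv]
    simp [mul_comm]
  rw [h]
  exact (integrable_weight_mul hw hB _).add
    (integrable_weight_mul (contDiff_fderiv_apply hw v) hC q)

/-- The pointwise product of two Schwartz functions. -/
def smul2 {m : ℕ} (p q : 𝓢(ℝ × (Fin m → ℝ), ℝ)) : 𝓢(ℝ × (Fin m → ℝ), ℝ) :=
  SchwartzMap.pairing (ContinuousLinearMap.mul ℝ ℝ) p q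

lemma smul2_apply {m : ℕ} (p q : 𝓢(ℝ × (Fin m → ℝ), ℝ)) (z : ℝ × (Fin m → ℝ)) :
    smul2 p q z = p z * q z := by
  simp [smul2]

/-- Domain of dependence for Schwartz solutions: the weighted currents are integrable because a
Schwartz function is multiplied by a bounded weight with bounded derivatives, although the cone
extends to time `-∞`. -/
theorem schwartz_vanishing {m : ℕ} {r ε : ℝ} (hε : 0 < ε) (c : ℝ × (Fin m → ℝ))
    (H : 𝓢(ℝ × (Fin m → ℝ), ℝ)) (heq : ∀ z, 0 < coneArg ε c z → KGtw (|r| + 2) r H z = 0)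
    (z : ℝ × (Fin m → ℝ)) (hz : 0 < coneArg ε c z) : H z = 0 := by
  set a := |r| + 2
  set M := |r| + 1
  have hw := contDiff_coneWeight hε c
  obtain ⟨C, hC0, hCk⟩ := exists_bound_coneWeight hε c
  have hB : ∀ z, |coneWeight ε c z| ≤ 1 := fun z => by
    rw [coneWeight, abs_of_nonneg (Real.smoothTransition.nonneg _)]
    exact Real.smoothTransition.le_one _
  let P : 𝓢(ℝ × (Fin m → ℝ), ℝ) := ∂_{((1, 0) : ℝ × (Fin m → ℝ))} H + a • H
  let Q : Fin m → 𝓢(ℝ × (Fin m → ℝ), ℝ) := fun k => ∂_{((0, Pi.single k 1) : ℝ × (Fin m → ℝ))} H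
  have hP : twP a H = P := rfl
  have hQ : ∀ k, dk k H = Q k := fun k => rfl
  have h0 : flux0 a M (coneWeight ε c) H = fun z => coneWeight ε c z *
      ((2⁻¹ : ℝ) • (smul2 P P + ∑ k, smul2 (Q k) (Q k) + M • smul2 H H) :
        𝓢(ℝ × (Fin m → ℝ), ℝ)) z := by
    funext z
    simp only [flux0, twE, hP, hQ, add_apply, smul_apply, sum_apply, smul2_apply, smul_eq_mul,
      pow_two]
  have hk : ∀ k, fluxk a (coneWeight ε c) H k = fun z => coneWeight ε c z *
      (-(smul2 P (Q k)) : 𝓢(ℝ × (Fin m → ℝ), ℝ)) z := by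
    intro k
    funext z
    simp only [fluxk, hP, hQ, neg_apply, smul2_apply]
  refine energy_vanishing (r := r) hw (H.smooth ⊤) (fun z => Real.smoothTransition.nonneg _)
    (d0_coneWeight_nonpos hε c) (sum_dk_coneWeight_sq_le hε c) (fun y => ?_) ?_ ?_ ?_ ?_ z
    (Real.smoothTransition.pos_of_pos hz)
  · rcases le_or_gt (coneArg ε c y) 0 with hy | hy
    · rw [coneWeight, Real.smoothTransition.zero_of_nonpos hy, zero_mul]
    · rw [heq y hy, mul_zero]
  · rw [h0]
    exact integrable_weight_mul hw hB _
  · rw [h0]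
    exact integrable_fderiv_weight_mul hw hB hC0 _
  · intro k
    rw [hk]
    exact integrable_weight_mul hw hB _
  · intro k
    rw [hk]
    exact integrable_fderiv_weight_mul hw hB (hCk k) _

/-- Domain of dependence for solutions that vanish at early times, without any growth condition:
the weighted currents are compactly supported. -/
theorem compact_vanishing {m : ℕ} {r ε : ℝ} (hε : 0 < ε) (c : ℝ × (Fin m → ℝ))
    (H : ℝ × (Fin m → ℝ) → ℝ) (hH : ContDiff ℝ ∞ H) (heq : ∀ z, KGtw (|r| + 2) r H z = 0)
    {t₀ : ℝ} (ht : ∀ z : ℝ × (Fin m → ℝ), z.1 < t₀ → H z = 0)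
    (z : ℝ × (Fin m → ℝ)) (hz : 0 < coneArg ε c z) : H z = 0 := by
  have hw := contDiff_coneWeight hε c
  set K : Set (ℝ × (Fin m → ℝ)) :=
    Icc t₀ c.1 ×ˢ Icc (fun k => c.2 k - (c.1 - t₀)) (fun k => c.2 k + (c.1 - t₀)) with hK
  have hKc : IsCompact K := isCompact_Icc.prod isCompact_Icc
  -- `K` contains the truncated cone, so the currents vanish off `K`
  have hout : ∀ y ∉ K, coneWeight ε c y = 0 ∨ y.1 < t₀ := by
    intro y hy
    by_contra hcon
    rw [not_or, not_lt] at hcon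
    apply hy
    have hpos : 0 < coneArg ε c y := by
      by_contra h
      exact hcon.1 (Real.smoothTransition.zero_of_nonpos (not_lt.1 h))
    have hs : √(ε ^ 2 + ∑ k, (y.2 k - c.2 k) ^ 2) < c.1 - y.1 := by
      unfold coneArg at hpos
      linarith
    have h0 := Real.sqrt_nonneg (ε ^ 2 + ∑ k, (y.2 k - c.2 k) ^ 2)
    have hkk : ∀ k, |y.2 k - c.2 k| ≤ c.1 - t₀ := fun k => by
      have h1 : |y.2 k - c.2 k| ≤ √(ε ^ 2 + ∑ k, (y.2 k - c.2 k) ^ 2) := by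
        refine Real.abs_le_sqrt ?_
        have := Finset.single_le_sum (f := fun k => (y.2 k - c.2 k) ^ 2)
          (fun k _ => sq_nonneg _) (Finset.mem_univ k)
        have h2 := sq_nonneg ε
        linarith
      linarith [hcon.2]
    refine ⟨⟨hcon.2, by linarith⟩, fun k => ?_, fun k => ?_⟩
    · have := (abs_le.1 (hkk k)).1
      simp only
      linarith
    · have := (abs_le.1 (hkk k)).2
      simp only
      linarith
  have hH0 : ∀ y : ℝ × (Fin m → ℝ), y.1 < t₀ → ∀ v, fderiv ℝ H y v = 0 := by
    intro y hy v
    have : H =ᶠ[nhds y] fun _ => 0 := by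
      filter_upwards [(isOpen_Iio.preimage continuous_fst).mem_nhds hy] with x hx
      exact ht x hx
    rw [this.fderiv_eq]
    simp
  have hc0 : HasCompactSupport (flux0 (|r| + 2) (|r| + 1) (coneWeight ε c) H) := by
    refine HasCompactSupport.intro hKc fun y hy => ?_
    rcases hout y hy with h | h
    · simp [flux0, h]
    · simp [flux0, twE, twP, d0, dk, hH0 y h, ht y h]
  have hck : ∀ k, HasCompactSupport (fluxk (|r| + 2) (coneWeight ε c) H k) := by
    refine fun k => HasCompactSupport.intro hKc fun y hy => ?_
    rcases hout y hy with h | h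
    · simp [fluxk, h]
    · simp [fluxk, twP, d0, dk, hH0 y h, ht y h]
  have hs0 := contDiff_flux0 (a := |r| + 2) (M := |r| + 1) hw hH
  have hsk := contDiff_fluxk (a := |r| + 2) hw hH
  refine energy_vanishing (r := r) hw hH (fun z => Real.smoothTransition.nonneg _)
    (d0_coneWeight_nonpos hε c) (sum_dk_coneWeight_sq_le hε c) (fun y => by rw [heq y, mul_zero])
    (hs0.continuous.integrable_of_hasCompactSupport hc0)
    ((contDiff_d0 hs0).continuous.integrable_of_hasCompactSupport (hc0.fderiv_apply ℝ _))
    (fun k => (hsk k).continuous.integrable_of_hasCompactSupport (hck k))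
    (fun k => (contDiff_dk (hsk k) k).continuous.integrable_of_hasCompactSupport
      ((hck k).fderiv_apply ℝ _)) z
    (Real.smoothTransition.pos_of_pos hz)

/-! ### Conjugation by `exp (a t)` and linearity -/

lemma contDiff_exp_time {m : ℕ} (a : ℝ) :
    ContDiff ℝ ∞ fun z : ℝ × (Fin m → ℝ) => Real.exp (a * z.1) :=
  (contDiff_const.mul contDiff_fst).exp

lemma fderiv_exp_mul {m : ℕ} (a : ℝ) {H : ℝ × (Fin m → ℝ) → ℝ} (hH : ContDiff ℝ ∞ H)
    (z v : ℝ × (Fin m → ℝ)) :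
    fderiv ℝ (fun z => Real.exp (a * z.1) * H z) z v =
      Real.exp (a * z.1) * (fderiv ℝ H z v + a * v.1 * H z) := by
  have h1 : HasFDerivAt (fun y : ℝ × (Fin m → ℝ) => a * y.1)
      (a • ContinuousLinearMap.fst ℝ ℝ (Fin m → ℝ)) z := hasFDerivAt_fst.const_mul a
  have h2 := (hH.differentiable (by simp) z).hasFDerivAt
  rw [(h1.exp.fun_mul h2).fderiv]
  simp only [add_apply, smul_apply, smul_eq_mul, ContinuousLinearMap.coe_fst']
  ring

lemma d0_exp_mul {m : ℕ} (a : ℝ) {H : ℝ × (Fin m → ℝ) → ℝ} (hH : ContDiff ℝ ∞ H) :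
    d0 (fun z => Real.exp (a * z.1) * H z) = fun z => Real.exp (a * z.1) * twP a H z := by
  funext z
  rw [d0, fderiv_exp_mul a hH]
  simp [twP, d0]

lemma dk_exp_mul {m : ℕ} (a : ℝ) {H : ℝ × (Fin m → ℝ) → ℝ} (hH : ContDiff ℝ ∞ H) (k : Fin m) :
    dk k (fun z => Real.exp (a * z.1) * H z) = fun z => Real.exp (a * z.1) * dk k H z := by
  funext z
  rw [dk, fderiv_exp_mul a hH]
  simp [dk]

lemma KG_exp_mul {m : ℕ} (a r : ℝ) {H : ℝ × (Fin m → ℝ) → ℝ} (hH : ContDiff ℝ ∞ H)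
    (z : ℝ × (Fin m → ℝ)) :
    KG r (fun z => Real.exp (a * z.1) * H z) z = Real.exp (a * z.1) * KGtw a r H z := by
  have h1 : d0 (twP a H) z = d0 (d0 H) z + a * d0 H z := fderiv_twP hH z _
  simp only [KG, KGtw, d0_exp_mul a hH, dk_exp_mul a hH, d0_exp_mul a (contDiff_twP hH),
    dk_exp_mul a (contDiff_dk hH _), ← Finset.mul_sum]
  rw [twP, h1, twP]
  ring

lemma KG_sub {m : ℕ} (r : ℝ) {U V : ℝ × (Fin m → ℝ) → ℝ} (hU : ContDiff ℝ ∞ U)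
    (hV : ContDiff ℝ ∞ V) (z : ℝ × (Fin m → ℝ)) :
    KG r (fun y => U y - V y) z = KG r U z - KG r V z := by
  have key : ∀ {A B : ℝ × (Fin m → ℝ) → ℝ}, ContDiff ℝ ∞ A → ContDiff ℝ ∞ B → ∀ y v,
      fderiv ℝ (fun y => A y - B y) y v = fderiv ℝ A y v - fderiv ℝ B y v := by
    intro A B hA hB y v
    rw [fderiv_fun_sub (hA.differentiable (by simp) y) (hB.differentiable (by simp) y), sub_apply]
  have h0 : d0 (fun y => U y - V y) = fun y => d0 U y - d0 V y := funext fun y => key hU hV y _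
  have hk : ∀ k, dk k (fun y => U y - V y) = fun y => dk k U y - dk k V y :=
    fun k => funext fun y => key hU hV y _
  have h00 : d0 (fun y => d0 U y - d0 V y) z = d0 (d0 U) z - d0 (d0 V) z :=
    key (contDiff_d0 hU) (contDiff_d0 hV) z _
  have hkk : ∀ k, dk k (fun y => dk k U y - dk k V y) z = dk k (dk k U) z - dk k (dk k V) z :=
    fun k => key (contDiff_dk hU k) (contDiff_dk hV k) z _
  simp only [KG, h0, hk, h00, hkk, Finset.sum_sub_distrib]
  ring

/-! ### Retarded solutions -/

open scoped Pointwise in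
lemma isClosed_Jplus {m : ℕ} {K : Set (ℝ × (Fin m → ℝ))} (hK : IsCompact K) :
    IsClosed (Jplus K) := by
  have hC : IsClosed {v : ℝ × (Fin m → ℝ) | mink v v ≤ 0 ∧ 0 ≤ v.1} := by
    have hm : Continuous fun v : ℝ × (Fin m → ℝ) => mink v v := by
      unfold mink
      fun_prop
    exact (isClosed_le hm continuous_const).and (isClosed_le continuous_const continuous_fst)
  have : Jplus K = K + {v : ℝ × (Fin m → ℝ) | mink v v ≤ 0 ∧ 0 ≤ v.1} := by
    ext z
    rw [Set.mem_add]
    constructor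
    · rintro ⟨w, hw, h1, h2⟩
      exact ⟨w, hw, z - w, ⟨h1, h2⟩, by abel⟩
    · rintro ⟨w, hw, v, ⟨h1, h2⟩, rfl⟩
      refine ⟨w, hw, ?_, ?_⟩
      · rwa [add_sub_cancel_left]
      · simpa using h2
  rw [this]
  exact hC.add_left_of_isCompact hK

/-- The region `0 < coneArg ε c` lies in the causal past of `c`. -/
lemma mem_Jplus_of_coneArg_pos {m : ℕ} {ε : ℝ} {c y : ℝ × (Fin m → ℝ)} {K : Set (ℝ × (Fin m → ℝ))}
    (hy : y ∈ K) (h : 0 < coneArg ε c y) : c ∈ Jplus K := by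
  have h0 : 0 ≤ ∑ k, (y.2 k - c.2 k) ^ 2 := Finset.sum_nonneg fun k _ => sq_nonneg _
  have hs : √(ε ^ 2 + ∑ k, (y.2 k - c.2 k) ^ 2) < c.1 - y.1 := by
    unfold coneArg at h
    linarith
  have hn := Real.sqrt_nonneg (ε ^ 2 + ∑ k, (y.2 k - c.2 k) ^ 2)
  have hsq : ε ^ 2 + ∑ k, (y.2 k - c.2 k) ^ 2 ≤ (c.1 - y.1) ^ 2 := by
    rw [← Real.sq_sqrt (show 0 ≤ ε ^ 2 + ∑ k, (y.2 k - c.2 k) ^ 2 by positivity)]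
    exact pow_le_pow_left₀ hn hs.le 2
  refine ⟨y, hy, ?_, by linarith⟩
  have : ∑ k, (c - y).2 k * (c - y).2 k = ∑ k, (y.2 k - c.2 k) ^ 2 := by
    refine Finset.sum_congr rfl fun k _ => ?_
    simp only [Prod.snd_sub, Pi.sub_apply]
    ring
  rw [mink, this, Prod.fst_sub]
  nlinarith [sq_nonneg ε]

lemma coneArg_shift {m : ℕ} {ε : ℝ} (hε : 0 < ε) (z : ℝ × (Fin m → ℝ)) :
    coneArg ε (z.1 + 2 * ε, z.2) z = ε := by
  simp [coneArg, Real.sqrt_sq hε.le]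
  ring

/-- The retarded solution is `e^{at} H` for the Schwartz solution `H` of the conjugated equation. Off
`Jplus (tsupport F)`, which is closed, a whole smoothed backward cone around the point misses the
source, so `schwartz_vanishing` applies. -/
theorem retarded_exists {m : ℕ} (r : ℝ) {F : ℝ × (Fin m → ℝ) → ℝ} (hF : ContDiff ℝ ∞ F)
    (hc : HasCompactSupport F) :
    ∃ G, ContDiff ℝ ∞ G ∧ (∀ z, KG r G z = F z) ∧ tsupport G ⊆ Jplus (tsupport F) := by
  have hr := abs_nonneg r
  have hr1 := neg_abs_le r
  have hr2 := le_abs_self r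
  obtain ⟨H, hH⟩ := exists_twisted_solution (a := |r| + 2) (r := r) (by nlinarith) (by nlinarith)
    (fun z => Real.exp (-(|r| + 2) * z.1) * F z) ((contDiff_exp_time _).mul hF) hc.mul_left
  have hHs : ContDiff ℝ ∞ H := H.smooth ⊤
  refine ⟨fun z => Real.exp ((|r| + 2) * z.1) * H z, (contDiff_exp_time _).mul hHs, fun z => ?_, ?_⟩
  · rw [KG_exp_mul _ r hHs, hH, ← mul_assoc, ← Real.exp_add, neg_mul, add_neg_cancel, Real.exp_zero, one_mul]
  · refine closure_minimal (fun z hz => ?_) (isClosed_Jplus hc)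
    by_contra hzJ
    have hopen := (isClosed_Jplus (K := tsupport F) hc).isOpen_compl
    have hcont : Continuous fun s : ℝ => ((z.1 + 2 * s, z.2) : ℝ × (Fin m → ℝ)) := by fun_prop
    have hnear : ∀ᶠ s in nhds (0 : ℝ), ((z.1 + 2 * s, z.2) : ℝ × (Fin m → ℝ)) ∈ (Jplus (tsupport F))ᶜ :=
      hcont.continuousAt.eventually (hopen.mem_nhds (by simpa using hzJ))
    obtain ⟨ε, hεJ, hε⟩ := ((hnear.filter_mono nhdsWithin_le_nhds).and
      (self_mem_nhdsWithin (a := (0 : ℝ)) (s := Ioi 0))).exists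
    refine hz (mul_eq_zero_of_right _ ?_)
    refine schwartz_vanishing (r := r) hε (z.1 + 2 * ε, z.2) H (fun y hy => ?_) z ?_
    · rw [hH, image_eq_zero_of_notMem_tsupport fun hyF => hεJ (mem_Jplus_of_coneArg_pos hyF hy),
        mul_zero]
    · rw [coneArg_shift hε]
      exact hε

/-- The difference of two retarded solutions solves the homogeneous equation and vanishes before the
source is switched on. -/
theorem retarded_unique {m : ℕ} (r : ℝ) {F G₁ G₂ : ℝ × (Fin m → ℝ) → ℝ}
    (hc : HasCompactSupport F) (h₁ : ContDiff ℝ ∞ G₁) (h₂ : ContDiff ℝ ∞ G₂)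
    (he₁ : ∀ z, KG r G₁ z = F z) (he₂ : ∀ z, KG r G₂ z = F z)
    (hs₁ : tsupport G₁ ⊆ Jplus (tsupport F)) (hs₂ : tsupport G₂ ⊆ Jplus (tsupport F)) :
    G₁ = G₂ := by
  obtain ⟨t₀, ht₀⟩ := (hc.isCompact.image continuous_fst).bddBelow
  have hJ : ∀ z : ℝ × (Fin m → ℝ), z.1 < t₀ → z ∉ Jplus (tsupport F) := by
    rintro z hz ⟨w, hw, -, hzw⟩
    have := ht₀ ⟨w, hw, rfl⟩
    linarith
  have hu : ContDiff ℝ ∞ fun z => G₁ z - G₂ z := h₁.sub h₂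
  set H : ℝ × (Fin m → ℝ) → ℝ := fun z => Real.exp (-(|r| + 2) * z.1) * (G₁ z - G₂ z) with hHdef
  have hH : ContDiff ℝ ∞ H := (contDiff_exp_time _).mul hu
  have hback : (fun z => Real.exp ((|r| + 2) * z.1) * H z) = fun z => G₁ z - G₂ z := by
    funext z
    simp only [hHdef]
    rw [← mul_assoc, ← Real.exp_add, neg_mul, add_neg_cancel, Real.exp_zero, one_mul]
  have heq : ∀ z, KGtw (|r| + 2) r H z = 0 := by
    intro z
    have := KG_exp_mul (|r| + 2) r hH z
    rw [hback, KG_sub r h₁ h₂, he₁, he₂, sub_self] at this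
    exact (mul_eq_zero.1 this.symm).resolve_left (Real.exp_ne_zero _)
  funext z
  have hz : H z = 0 := by
    refine compact_vanishing (r := r) one_pos (z.1 + 2 * 1, z.2) H hH heq (t₀ := t₀) (fun y hy => ?_) z ?_
    · rw [hHdef]
      simp only
      rw [image_eq_zero_of_notMem_tsupport fun h => hJ y hy (hs₁ h),
        image_eq_zero_of_notMem_tsupport fun h => hJ y hy (hs₂ h), sub_self, mul_zero]
    · rw [coneArg_shift one_pos]
      exact one_pos
  exact sub_eq_zero.1 ((mul_eq_zero.1 hz).resolve_left (Real.exp_ne_zero _))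

theorem retarded_existsUnique {m : ℕ} (r : ℝ) {F : ℝ × (Fin m → ℝ) → ℝ} (hF : ContDiff ℝ ∞ F)
    (hc : HasCompactSupport F) :
    ∃! G, ContDiff ℝ ∞ G ∧ (∀ z, KG r G z = F z) ∧ tsupport G ⊆ Jplus (tsupport F) := by
  obtain ⟨G, h1, h2, h3⟩ := retarded_exists r hF hc
  exact ⟨G, ⟨h1, h2, h3⟩, fun G' h' => retarded_unique r hc h'.1 h1 h'.2.1 h2 h'.2.2 h3⟩

/-! ### Time reversal -/

/-- Time reversal `(t, x) ↦ (-t, x)`. -/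
def timeRev (m : ℕ) : (ℝ × (Fin m → ℝ)) ≃L[ℝ] (ℝ × (Fin m → ℝ)) :=
  (ContinuousLinearEquiv.neg ℝ).prodCongr (ContinuousLinearEquiv.refl ℝ _)

lemma timeRev_apply {m : ℕ} (z : ℝ × (Fin m → ℝ)) : timeRev m z = (-z.1, z.2) := rfl

lemma timeRev_timeRev {m : ℕ} (z : ℝ × (Fin m → ℝ)) : timeRev m (timeRev m z) = z := by
  simp [timeRev_apply]

lemma comp_timeRev_timeRev {m : ℕ} (U : ℝ × (Fin m → ℝ) → ℝ) :
    (U ∘ timeRev m) ∘ timeRev m = U :=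
  funext fun z => congrArg U (timeRev_timeRev z)

lemma fderiv_comp_timeRev {m : ℕ} (U : ℝ × (Fin m → ℝ) → ℝ) (z v : ℝ × (Fin m → ℝ)) :
    fderiv ℝ (U ∘ timeRev m) z v = fderiv ℝ U (timeRev m z) (timeRev m v) := by
  rw [(timeRev m).comp_right_fderiv]
  rfl

lemma d0_comp_timeRev {m : ℕ} (U : ℝ × (Fin m → ℝ) → ℝ) :
    d0 (U ∘ timeRev m) = -(d0 U ∘ timeRev m) := by
  funext z
  have : timeRev m (1, 0) = -(1, 0) := by simp [timeRev_apply]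
  rw [d0, fderiv_comp_timeRev, this, map_neg]
  rfl

lemma dk_comp_timeRev {m : ℕ} (k : Fin m) (U : ℝ × (Fin m → ℝ) → ℝ) :
    dk k (U ∘ timeRev m) = dk k U ∘ timeRev m := by
  funext z
  rw [dk, fderiv_comp_timeRev, timeRev_apply (0, Pi.single k 1), neg_zero]
  rfl

lemma KG_comp_timeRev {m : ℕ} (r : ℝ) (U : ℝ × (Fin m → ℝ) → ℝ) (z : ℝ × (Fin m → ℝ)) :
    KG r (U ∘ timeRev m) z = KG r U (timeRev m z) := by
  have h : d0 (-(d0 U ∘ timeRev m)) z = d0 (d0 U) (timeRev m z) := by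
    rw [d0, fderiv_neg, neg_apply, ← d0, d0_comp_timeRev]
    simp
  simp only [KG, d0_comp_timeRev, dk_comp_timeRev, h, Function.comp_apply]

lemma tsupport_comp_timeRev {m : ℕ} (U : ℝ × (Fin m → ℝ) → ℝ) :
    tsupport (U ∘ timeRev m) = timeRev m ⁻¹' tsupport U :=
  tsupport_comp_eq_preimage U (timeRev m).toHomeomorph

lemma mem_Jplus_timeRev {m : ℕ} (S : Set (ℝ × (Fin m → ℝ))) (z : ℝ × (Fin m → ℝ)) :
    z ∈ Jplus (timeRev m ⁻¹' S) ↔ timeRev m z ∈ Jminus S := by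
  have hm : ∀ w : ℝ × (Fin m → ℝ), mink (timeRev m z - timeRev m w) (timeRev m z - timeRev m w)
      = mink (z - w) (z - w) := by
    intro w
    simp only [mink, timeRev_apply, Prod.fst_sub, Prod.snd_sub]
    ring
  have ht : ∀ w : ℝ × (Fin m → ℝ), -((timeRev m z).1 - (timeRev m w).1) = z.1 - w.1 := by
    intro w
    simp only [timeRev_apply]
    ring
  constructor
  · rintro ⟨w, hw, h1, h2⟩
    exact ⟨timeRev m w, hw, (hm w).trans_le h1, (ht w).symm ▸ h2⟩
  · rintro ⟨w, hw, h1, h2⟩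
    refine ⟨timeRev m w, by rwa [mem_preimage, timeRev_timeRev], ?_, ?_⟩
    · rwa [← hm, timeRev_timeRev]
    · rwa [← ht, timeRev_timeRev]

/-- Time reversal exchanges the advanced problem for `F` and the retarded problem for `F ∘ timeRev`. -/
lemma retarded_comp_timeRev_iff {m : ℕ} (r : ℝ) (F G : ℝ × (Fin m → ℝ) → ℝ) :
    (ContDiff ℝ ∞ (G ∘ timeRev m) ∧ (∀ z, KG r (G ∘ timeRev m) z = (F ∘ timeRev m) z) ∧
      tsupport (G ∘ timeRev m) ⊆ Jplus (tsupport (F ∘ timeRev m))) ↔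
    (ContDiff ℝ ∞ G ∧ (∀ z, KG r G z = F z) ∧ tsupport G ⊆ Jminus (tsupport F)) := by
  refine and_congr ⟨fun h => ?_, fun h => h.comp (timeRev m).contDiff⟩ (and_congr ?_ ?_)
  · rw [← comp_timeRev_timeRev G]
    exact h.comp (timeRev m).contDiff
  · simp only [KG_comp_timeRev, Function.comp_apply]
    exact ((timeRev m).surjective.forall (p := fun z => KG r G z = F z)).symm
  · rw [tsupport_comp_timeRev, tsupport_comp_timeRev]
    constructor
    · intro h z hz
      rw [← timeRev_timeRev z, ← mem_Jplus_timeRev]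
      exact h (by rwa [mem_preimage, timeRev_timeRev])
    · intro h z hz
      exact (mem_Jplus_timeRev _ _).2 (h hz)

theorem advanced_existsUnique {m : ℕ} (r : ℝ) {F : ℝ × (Fin m → ℝ) → ℝ} (hF : ContDiff ℝ ∞ F)
    (hc : HasCompactSupport F) :
    ∃! G, ContDiff ℝ ∞ G ∧ (∀ z, KG r G z = F z) ∧ tsupport G ⊆ Jminus (tsupport F) := by
  obtain ⟨G, hG, huniq⟩ := retarded_existsUnique r (hF.comp (timeRev m).contDiff)
    (hc.comp_homeomorph (timeRev m).toHomeomorph)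
  refine ⟨G ∘ timeRev m, ?_, fun G' hG' => ?_⟩
  · refine (retarded_comp_timeRev_iff r F _).1 ?_
    rw [comp_timeRev_timeRev]
    exact hG
  · rw [← huniq _ ((retarded_comp_timeRev_iff r F G').2 hG'), comp_timeRev_timeRev]

/-- existence and uniqueness of the retarded and advanced solutions
`E^±F` of the Klein–Gordon equation, with support in the causal future/past of
the support of the source `F ∈ C_c^∞(ℝ^d)`. -/
theorem retarded_advanced_solutions (d : ℕ) (hd : 2 ≤ d) (r : ℝ)
    (F : ℝ × (Fin (d-1) → ℝ) → ℝ)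
    (hF : ContDiff ℝ (⊤ : ℕ∞) F) (hsupp : HasCompactSupport F) :
    (∃! G : ℝ × (Fin (d-1) → ℝ) → ℝ,
      ContDiff ℝ (⊤ : ℕ∞) G ∧ (∀ z, KG r G z = F z) ∧ tsupport G ⊆ Jplus (tsupport F)) ∧
    (∃! G : ℝ × (Fin (d-1) → ℝ) → ℝ,
      ContDiff ℝ (⊤ : ℕ∞) G ∧ (∀ z, KG r G z = F z) ∧ tsupport G ⊆ Jminus (tsupport F)) := by
  exact ⟨retarded_existsUnique r hF hsupp, advanced_existsUnique r hF hsupp⟩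
end
end

section
/- Let d ≥ 2 and r ∈ ℝ. Let U be a smooth, spatially compactly supported solution of (∂₀² − Δ + r)U = 0, let F ∈ C_c^∞(ℝ^d, ℝ), and let G^± be the unique smooth solutions of (∂₀² − Δ + r)G^± = F with supp G^± ⊆ J^±(supp F). Set EF = G^+ − G^−. Then for every t ∈ ℝ, ∫_{ℝ^d} U(x) F(x) dx = σ_t(U, EF), where σ_t(U,V) = ∫_{ℝ^{d−1}} ( U ∂₀V − ∂₀U V )(t,x⃗) dx⃗. -/
/-! The statement is Green's identity for the Klein–Gordon operator. For a direction `v` put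
`J_v = U ∂_v G - ∂_v U G`. If `KG U = 0` and `KG G = F`, then
`∂₀ J₀ = U F + ∑ₖ ∂ₖ Jₖ` (`d0_current`). On every time slab `U`, and hence each current, has
compact spatial support, so integrating over `[a, b] × ℝ^{d-1}` kills the spatial divergence and
Fubini gives `σ_b(U, G) - σ_a(U, G) = ∫_a^b ∫ U F` (`sigmaT_sub_sigmaT`).

Choose `a ≤ t ≤ b` such that `F` lives strictly between the times `a` and `b`. The support
conditions make `G⁺` vanish near time `a` and `G⁻` vanish near time `b`; thus
`σ_t(U, G⁺) = ∫_a^t ∫ U F` and `σ_t(U, G⁻) = -∫_t^b ∫ U F`. The difference is the integral over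
`[a, b]`, which is the full space-time integral. -/

open Real Set MeasureTheory

noncomputable section

/-! ### Currents -/

/-- The `v`-component `U ∂_v G - ∂_v U G` of the symplectic current of `U` and `G`. -/
def current {m : ℕ} (v : ℝ × (Fin m → ℝ)) (U G : ℝ × (Fin m → ℝ) → ℝ) :
    ℝ × (Fin m → ℝ) → ℝ :=
  fun z => U z * fderiv ℝ G z v - fderiv ℝ U z v * G z

lemma contDiff_dir {m : ℕ} (v : ℝ × (Fin m → ℝ)) {U : ℝ × (Fin m → ℝ) → ℝ}
    (hU : ContDiff ℝ (⊤ : ℕ∞) U) : ContDiff ℝ (⊤ : ℕ∞) (fun z => fderiv ℝ U z v) :=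
  (hU.fderiv_right (m := (⊤ : ℕ∞)) (by norm_cast)).clm_apply contDiff_const

lemma contDiff_current {m : ℕ} (v : ℝ × (Fin m → ℝ)) {U G : ℝ × (Fin m → ℝ) → ℝ}
    (hU : ContDiff ℝ (⊤ : ℕ∞) U) (hG : ContDiff ℝ (⊤ : ℕ∞) G) :
    ContDiff ℝ (⊤ : ℕ∞) (current v U G) :=
  (hU.mul (contDiff_dir v hG)).sub ((contDiff_dir v hU).mul hG)

/-- The first-order cross terms cancel when a current is differentiated along its own direction. -/
lemma fderiv_current {m : ℕ} (v : ℝ × (Fin m → ℝ)) {U G : ℝ × (Fin m → ℝ) → ℝ}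
    (hU : ContDiff ℝ (⊤ : ℕ∞) U) (hG : ContDiff ℝ (⊤ : ℕ∞) G) (z : ℝ × (Fin m → ℝ)) :
    fderiv ℝ (current v U G) z v =
      U z * fderiv ℝ (fun y => fderiv ℝ G y v) z v -
        fderiv ℝ (fun y => fderiv ℝ U y v) z v * G z := by
  have h1 := (hU.differentiable (by simp) z).hasFDerivAt
  have h2 := (hG.differentiable (by simp) z).hasFDerivAt
  have h3 := ((contDiff_dir v hU).differentiable (by simp) z).hasFDerivAt
  have h4 := ((contDiff_dir v hG).differentiable (by simp) z).hasFDerivAt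
  have h := ((h1.mul h4).sub (h3.mul h2)).fderiv
  have h' : fderiv ℝ (current v U G) z = _ := h
  rw [h']
  simp
  ring

/-- The local form of Green's identity. -/
lemma d0_current {m : ℕ} {r : ℝ} {U G F : ℝ × (Fin m → ℝ) → ℝ}
    (hU : ContDiff ℝ (⊤ : ℕ∞) U) (hG : ContDiff ℝ (⊤ : ℕ∞) G)
    (heU : ∀ z, KG r U z = 0) (heG : ∀ z, KG r G z = F z) (z : ℝ × (Fin m → ℝ)) :
    d0 (current (1, 0) U G) z =
      U z * F z + ∑ k : Fin m, dk k (current (0, Pi.single k 1) U G) z := by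
  have h0 : d0 (current (1, 0) U G) z = U z * d0 (d0 G) z - d0 (d0 U) z * G z :=
    fderiv_current (1, 0) hU hG z
  have hk : ∀ k : Fin m, dk k (current (0, Pi.single k 1) U G) z =
      U z * dk k (dk k G) z - dk k (dk k U) z * G z :=
    fun k => fderiv_current (0, Pi.single k 1) hU hG z
  simp only [hk, h0, Finset.sum_sub_distrib, ← Finset.mul_sum, ← Finset.sum_mul]
  have e1 := heU z
  have e2 := heG z
  simp only [KG] at e1 e2
  rw [← e2]
  linear_combination (-G z) * e1

lemma tsupport_dir_subset {m : ℕ} (v : ℝ × (Fin m → ℝ)) (U : ℝ × (Fin m → ℝ) → ℝ) :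
    tsupport (fun z => fderiv ℝ U z v) ⊆ tsupport U := by
  refine closure_minimal (fun z hz => ?_) (isClosed_tsupport U)
  refine support_fderiv_subset ℝ (fun h => hz ?_)
  simp only [h]
  rfl

lemma tsupport_current_subset {m : ℕ} (v : ℝ × (Fin m → ℝ)) (U G : ℝ × (Fin m → ℝ) → ℝ) :
    tsupport (current v U G) ⊆ tsupport U := by
  refine closure_minimal (fun z hz => ?_) (isClosed_tsupport U)
  by_contra h
  refine hz ?_
  have h2 : fderiv ℝ U z v = 0 :=
    image_eq_zero_of_notMem_tsupport (f := fun z => fderiv ℝ U z v)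
      (fun h' => h (tsupport_dir_subset v U h'))
  simp [current, image_eq_zero_of_notMem_tsupport h, h2]

/-! ### Slab integrals of functions supported in a spatially compact set -/

/-- On a bounded time interval a spatially compact function vanishes outside a fixed compact set
of spatial points; the same set serves every `W` supported inside `tsupport U`. -/
lemma exists_compact_slab {m : ℕ} {U : ℝ × (Fin m → ℝ) → ℝ} (hUc : SpatCompact U) (a b : ℝ) :
    ∃ K : Set (Fin m → ℝ), IsCompact K ∧
      ∀ W : ℝ × (Fin m → ℝ) → ℝ, tsupport W ⊆ tsupport U →
        ∀ t ∈ Icc a b, ∀ x, x ∉ K → W (t, x) = 0 := by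
  have hT : 0 < |a| + |b| + 1 := by positivity
  refine ⟨_, (hUc _ hT).image continuous_snd, fun W hW t ht x hx => ?_⟩
  refine image_eq_zero_of_notMem_tsupport (fun h => hx ⟨(t, x), ⟨hW h, ⟨?_, ?_⟩, mem_univ _⟩, rfl⟩)
  · have := neg_abs_le a
    have := abs_nonneg b
    have := ht.1
    dsimp only
    linarith
  · have := le_abs_self b
    have := abs_nonneg a
    have := ht.2
    dsimp only
    linarith

lemma hasCompactSupport_slice {m : ℕ} {U W : ℝ × (Fin m → ℝ) → ℝ} (hUc : SpatCompact U)
    (hW : tsupport W ⊆ tsupport U) (t : ℝ) : HasCompactSupport (fun x => W (t, x)) := by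
  obtain ⟨K, hK, h⟩ := exists_compact_slab hUc t t
  exact HasCompactSupport.intro hK (fun x hx => h W hW t ⟨le_rfl, le_rfl⟩ x hx)

lemma integrable_slice {m : ℕ} {U W : ℝ × (Fin m → ℝ) → ℝ} (hUc : SpatCompact U)
    (hWc : Continuous W) (hW : tsupport W ⊆ tsupport U) (t : ℝ) :
    Integrable (fun x => W (t, x)) :=
  (hWc.comp (by fun_prop)).integrable_of_hasCompactSupport (hasCompactSupport_slice hUc hW t)

lemma integrable_slab {m : ℕ} {U W : ℝ × (Fin m → ℝ) → ℝ} (hUc : SpatCompact U)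
    (hWc : Continuous W) (hW : tsupport W ⊆ tsupport U) (a b : ℝ) :
    Integrable W ((volume.restrict (Ioc a b)).prod (volume : Measure (Fin m → ℝ))) := by
  obtain ⟨K, hK, h⟩ := exists_compact_slab hUc a b
  have h1 : IntegrableOn W (Icc a b ×ˢ K) :=
    hWc.continuousOn.integrableOn_compact (isCompact_Icc.prod hK)
  have h2 : IntegrableOn W (Icc a b ×ˢ univ) := by
    refine h1.of_forall_sdiff_eq_zero (measurableSet_Icc.prod MeasurableSet.univ) ?_
    rintro ⟨t, x⟩ ⟨⟨ht, -⟩, hx⟩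
    exact h W hW t ht x (fun hxK => hx ⟨ht, hxK⟩)
  have h3 : IntegrableOn W (Ioc a b ×ˢ univ) :=
    h2.mono_set (prod_mono Ioc_subset_Icc_self subset_rfl)
  rw [IntegrableOn, Measure.volume_eq_prod, ← Measure.prod_restrict, Measure.restrict_univ] at h3
  exact h3

/-- A spatial derivative has vanishing integral over each time slice. -/
lemma integral_dk_slice {m : ℕ} {U W : ℝ × (Fin m → ℝ) → ℝ} (hUc : SpatCompact U)
    (hWc : ContDiff ℝ (⊤ : ℕ∞) W) (hW : tsupport W ⊆ tsupport U) (k : Fin m) (t : ℝ) :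
    ∫ x, dk k W (t, x) = 0 := by
  have hd : ∀ x, HasLineDerivAt ℝ (fun x => W (t, x)) (dk k W (t, x)) x (Pi.single k 1) := by
    intro x
    have h1 := (hWc.differentiable (by simp) (t, x)).hasFDerivAt
    have h2 : HasFDerivAt (fun x : Fin m → ℝ => (t, x))
        (ContinuousLinearMap.inr ℝ ℝ (Fin m → ℝ)) x := hasFDerivAt_prodMk_right t x
    exact (h1.comp x h2).hasLineDerivAt (Pi.single k 1)
  have hI : Integrable (fun x => W (t, x)) := integrable_slice hUc hWc.continuous hW t
  have hI' : Integrable (fun x => dk k W (t, x)) :=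
    integrable_slice hUc (contDiff_dir _ hWc).continuous ((tsupport_dir_subset _ W).trans hW) t
  -- integration by parts against the constant function `1`
  have := integral_bilinear_hasLineDerivAt_right_eq_neg_left_of_integrable
    (μ := (volume : Measure (Fin m → ℝ))) (f := fun _ => (1 : ℝ)) (f' := fun _ => (0 : ℝ))
    (g := fun x => W (t, x)) (g' := fun x => dk k W (t, x)) (v := Pi.single k 1)
    (B := ContinuousLinearMap.mul ℝ ℝ) (by simp) (by simpa using hI') (by simpa using hI)
    (fun x _ => by simpa using (hasFDerivAt_const (𝕜 := ℝ) (1 : ℝ) x).hasLineDerivAt (Pi.single k 1))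
    (fun x _ => hd x)
  simpa using this

/-! ### Evolution of the symplectic form -/

/-- Green's identity on the slab between the times `a` and `b`. -/
lemma sigmaT_sub_sigmaT {m : ℕ} {r : ℝ} {U G F : ℝ × (Fin m → ℝ) → ℝ}
    (hU : ContDiff ℝ (⊤ : ℕ∞) U) (hG : ContDiff ℝ (⊤ : ℕ∞) G) (hUc : SpatCompact U)
    (hF : Continuous F)
    (heU : ∀ z, KG r U z = 0) (heG : ∀ z, KG r G z = F z) {a b : ℝ} (hab : a ≤ b) :
    sigmaT b U G - sigmaT a U G = ∫ t in a..b, ∫ x, U (t, x) * F (t, x) := by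
  have hJ := contDiff_current (1, 0) hU hG
  have hJs := tsupport_current_subset (1, 0) U G
  have hD : Continuous (d0 (current (1, 0) U G)) := (contDiff_dir _ hJ).continuous
  have hDs : tsupport (d0 (current (1, 0) U G)) ⊆ tsupport U :=
    (tsupport_dir_subset _ _).trans hJs
  have hderiv : ∀ x t, HasDerivAt (fun t => current (1, 0) U G (t, x))
      (d0 (current (1, 0) U G) (t, x)) t := by
    intro x t
    have h1 := (hJ.differentiable (by simp) (t, x)).hasFDerivAt
    have h2 : HasFDerivAt (fun t : ℝ => (t, x))
        (ContinuousLinearMap.inl ℝ ℝ (Fin m → ℝ)) t := hasFDerivAt_prodMk_left t x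
    exact (h1.comp t h2).hasDerivAt
  calc sigmaT b U G - sigmaT a U G
      = ∫ x, (current (1, 0) U G (b, x) - current (1, 0) U G (a, x)) :=
        (integral_sub (integrable_slice hUc hJ.continuous hJs b)
          (integrable_slice hUc hJ.continuous hJs a)).symm
    _ = ∫ x, ∫ t in a..b, d0 (current (1, 0) U G) (t, x) := by
        refine integral_congr_ae (Filter.Eventually.of_forall fun x => ?_)
        refine (intervalIntegral.integral_eq_sub_of_hasDerivAt (fun t _ => hderiv x t) ?_).symm
        exact (hD.comp (by fun_prop : Continuous fun t : ℝ => (t, x))).intervalIntegrable a b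
    _ = ∫ t in a..b, ∫ x, d0 (current (1, 0) U G) (t, x) := by
        simp only [intervalIntegral.integral_of_le hab]
        exact (integral_integral_swap
          (f := fun t x => d0 (current (1, 0) U G) (t, x)) (integrable_slab hUc hD hDs a b)).symm
    _ = ∫ t in a..b, ∫ x, U (t, x) * F (t, x) := by
        congr 1
        funext t
        simp only [d0_current hU hG heU heG]
        have hIk : ∀ k ∈ (Finset.univ : Finset (Fin m)),
            Integrable fun x => dk k (current (0, Pi.single k 1) U G) (t, x) := fun k _ =>
          integrable_slice hUc (contDiff_dir _ (contDiff_current _ hU hG)).continuous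
            ((tsupport_dir_subset _ _).trans (tsupport_current_subset _ U G)) t
        have hIF : Integrable fun x => U (t, x) * F (t, x) :=
          integrable_slice (W := fun z => U z * F z) hUc (hU.continuous.mul hF)
            (tsupport_mul_subset_left) t
        rw [integral_add hIF (integrable_finsetSum _ hIk), integral_finsetSum _ hIk]
        simp only [integral_dk_slice hUc (contDiff_current _ hU hG)
          (tsupport_current_subset _ U G), Finset.sum_const_zero, add_zero]

lemma sigmaT_eq_zero {m : ℕ} {U G : ℝ × (Fin m → ℝ) → ℝ} {t : ℝ}
    (h : ∀ x, (t, x) ∉ tsupport G) : sigmaT t U G = 0 := by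
  have h1 : ∀ x, G (t, x) = 0 := fun x => image_eq_zero_of_notMem_tsupport (h x)
  have h2 : ∀ x, d0 G (t, x) = 0 := fun x =>
    image_eq_zero_of_notMem_tsupport (fun h' => h x (tsupport_dir_subset _ G h'))
  simp [sigmaT, h1, h2]

lemma sigmaT_sub {m : ℕ} {U G H : ℝ × (Fin m → ℝ) → ℝ}
    (hU : ContDiff ℝ (⊤ : ℕ∞) U) (hG : ContDiff ℝ (⊤ : ℕ∞) G) (hH : ContDiff ℝ (⊤ : ℕ∞) H)
    (hUc : SpatCompact U) (t : ℝ) :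
    sigmaT t U (G - H) = sigmaT t U G - sigmaT t U H := by
  refine Eq.trans ?_ (integral_sub
    (integrable_slice hUc (contDiff_current (1, 0) hU hG).continuous
      (tsupport_current_subset _ U G) t)
    (integrable_slice hUc (contDiff_current (1, 0) hU hH).continuous
      (tsupport_current_subset _ U H) t))
  refine integral_congr_ae (Filter.Eventually.of_forall fun x => ?_)
  have h : fderiv ℝ (G - H) (t, x) = fderiv ℝ G (t, x) - fderiv ℝ H (t, x) :=
    fderiv_sub (hG.differentiable (by simp) _) (hH.differentiable (by simp) _)
  simp only [d0, h, Pi.sub_apply, sub_apply]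
  ring

/-- any smooth, spatially compactly supported solution `U` of the
Klein–Gordon equation, regarded as a distribution, is expressed in terms of its
Cauchy data by `⟨U,F⟩ = σ_t(U, EF)`, where `EF = E⁺F − E⁻F` is the propagator. -/
theorem pairing_eq_sigma (d : ℕ) (hd : 2 ≤ d) (r : ℝ)
    (U : ℝ × (Fin (d-1) → ℝ) → ℝ)
    (hU : ContDiff ℝ (⊤ : ℕ∞) U) (heqU : ∀ z, KG r U z = 0) (hUc : SpatCompact U)
    (F : ℝ × (Fin (d-1) → ℝ) → ℝ)
    (hF : ContDiff ℝ (⊤ : ℕ∞) F) (hFsupp : HasCompactSupport F)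
    (Gp Gm : ℝ × (Fin (d-1) → ℝ) → ℝ)
    (hGp : ContDiff ℝ (⊤ : ℕ∞) Gp ∧ (∀ z, KG r Gp z = F z) ∧ tsupport Gp ⊆ Jplus (tsupport F))
    (hGm : ContDiff ℝ (⊤ : ℕ∞) Gm ∧ (∀ z, KG r Gm z = F z) ∧ tsupport Gm ⊆ Jminus (tsupport F)) :
    ∀ t : ℝ, ∫ z : ℝ × (Fin (d-1) → ℝ), U z * F z = sigmaT t U (Gp - Gm) := by
  intro t
  obtain ⟨hGp, heGp, hGps⟩ := hGp
  obtain ⟨hGm, heGm, hGms⟩ := hGm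
  -- `R` bounds the absolute times occurring in the support of `F`
  obtain ⟨R, hR⟩ : ∃ R : ℝ, ∀ z ∈ tsupport F, |z.1| ≤ R := by
    obtain ⟨R, hR⟩ := hFsupp.isCompact.isBounded.exists_norm_le
    exact ⟨R, fun z hz => (norm_fst_le z).trans (hR z hz)⟩
  obtain ⟨a, haR, hat⟩ : ∃ a, a < -R ∧ a ≤ t :=
    ⟨min (-R - 1) t, (min_le_left _ _).trans_lt (by linarith), min_le_right _ _⟩
  obtain ⟨b, hbR, htb⟩ : ∃ b, R < b ∧ t ≤ b :=
    ⟨max (R + 1) t, lt_of_lt_of_le (by linarith) (le_max_left _ _), le_max_right _ _⟩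
  have hpa : sigmaT a U Gp = 0 := by
    refine sigmaT_eq_zero fun x hx => ?_
    obtain ⟨w, hw, -, hw1⟩ := hGps hx
    have := (abs_le.1 (hR w hw)).1
    dsimp only at hw1
    linarith
  have hmb : sigmaT b U Gm = 0 := by
    refine sigmaT_eq_zero fun x hx => ?_
    obtain ⟨w, hw, -, hw1⟩ := hGms hx
    have := (abs_le.1 (hR w hw)).2
    dsimp only at hw1
    linarith
  have h1 := sigmaT_sub_sigmaT hU hGp hUc hF.continuous heqU heGp hat
  have h2 := sigmaT_sub_sigmaT hU hGm hUc hF.continuous heqU heGm htb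
  have hUF : Continuous fun z => U z * F z := hU.continuous.mul hF.continuous
  have hUFs : tsupport (fun z => U z * F z) ⊆ tsupport U := tsupport_mul_subset_left
  have hint : ∀ p q : ℝ, p ≤ q →
      IntervalIntegrable (fun t => ∫ x, U (t, x) * F (t, x)) volume p q := fun p q hpq =>
    (intervalIntegrable_iff_integrableOn_Ioc_of_le hpq).2
      (integrable_slab hUc hUF hUFs p q).integral_prod_left
  have hadd := intervalIntegral.integral_add_adjacent_intervals (hint a t hat) (hint t b htb)
  have hfull : ∫ z : ℝ × (Fin (d-1) → ℝ), U z * F z =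
      ∫ t in a..b, ∫ x, U (t, x) * F (t, x) := by
    rw [Measure.volume_eq_prod, integral_prod _ (by
      rw [← Measure.volume_eq_prod]
      exact hUF.integrable_of_hasCompactSupport hFsupp.mul_left),
      intervalIntegral.integral_of_le (hat.trans htb)]
    symm
    refine setIntegral_eq_integral_of_forall_compl_eq_zero fun s hs => ?_
    have hz : ∀ x, F (s, x) = 0 := fun x => by
      refine image_eq_zero_of_notMem_tsupport fun h => hs ?_
      have := abs_le.1 (hR _ h)
      exact ⟨by linarith [this.1], by linarith [this.2]⟩
    simp [hz]
  rw [sigmaT_sub hU hGp hGm hUc, hfull]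
  linarith
end
end
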